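/- arXiv:2304.02863 — 3 statements merged into one kernel-verified Lean document; each statement's English description precedes it below -/
import Mathlib

section
/- Let Φ be a stationary random measure on ℝ^d with intensity λ_Φ ∈ (0,∞), and let h : ℝ^d × ℝ^d → [0,∞] be a measurable function satisfying h(x + t, y + t) = h(x, y) for all x, y, t and ∫_{ℝ^d} h(x, y) dx = 1 for every y. Then λ_Φ = E[∫ h(0, z) dΦ(z)], and the unique disintegrating measure Q of the Campbell measure (i.e. the unique σ-finite Q on M(ℝ^d) with E[∫ g(x, T_xΦ) dΦ(x)] = ∫_{ℝ^d} ∫ g(x, ψ) dQ(ψ) dx for all measurable g ≥ 0) is given explicitly by Q(B) = E[∫ 1_B(T_zΦ) h(0, z) dΦ(z)] for every measurable B ⊆ M(ℝ^d). -/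
open MeasureTheory ENNReal

noncomputable section

/-- `ℝ^d`. -/
abbrev Vec (d : ℕ) := Fin d → ℝ

/-- The shift `T_t ψ`, defined by `(T_t ψ)(A) = ψ(A + t)`. -/
def shiftM {d : ℕ} (t : Vec d) (ψ : Measure (Vec d)) : Measure (Vec d) :=
  ψ.map (fun x => x - t)

/-- A measure is in `M(ℝ^d)` iff it is finite on bounded sets. -/
def BddFinite {d : ℕ} (ψ : Measure (Vec d)) : Prop :=
  ∀ s : Set (Vec d), Bornology.IsBounded s → ψ s < ⊤

/-- Translation covariance of `g : M(ℝ^d) × ℝ^d × ℝ^d → [0,∞]`. -/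
def Covariant3 {d : ℕ} (g : Measure (Vec d) → Vec d → Vec d → ℝ≥0∞) : Prop :=
  ∀ (t x y : Vec d) (ψ : Measure (Vec d)), g (shiftM t ψ) (x - t) (y - t) = g ψ x y

/-- A random measure `Ψ` on a probability space `(Ω, P)` is mass-stationary if the mass
transport principle holds for every translation-covariant measurable `g`. -/
def MassStationary {d : ℕ} {Ω : Type*} [MeasurableSpace Ω] (P : Measure Ω)
    (Ψ : Ω → Measure (Vec d)) : Prop :=
  ∀ g : Measure (Vec d) → Vec d → Vec d → ℝ≥0∞,
    Measurable (fun p : Measure (Vec d) × Vec d × Vec d => g p.1 p.2.1 p.2.2) →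
    Covariant3 g →
    ∫⁻ ω, (∫⁻ y, g (Ψ ω) 0 y ∂(Ψ ω)) ∂P = ∫⁻ ω, (∫⁻ y, g (Ψ ω) y 0 ∂(Ψ ω)) ∂P

/-- The unit box `[0,1)^d`. -/
def unitBox (d : ℕ) : Set (Vec d) := Set.univ.pi fun _ : Fin d => Set.Ico (0 : ℝ) 1

/-!
The second assertion is the disintegration formula tested on `g x ψ = 1_B(ψ) h(0, x)`, because
`∫ h(0, x) dx = ∫ h(-x, 0) dx = 1`.

For the first one, the intensity measure `μ(A) = E[Φ(A)]` is translation invariant by stationarity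
and s-finite by local finiteness of `Φ`. Tonelli's theorem then gives Halmos' exchange formula
`μ(A) ∫ f(x) dx = |A| ∫ f(-x) dμ(x)`, valid even when `μ` takes only the values `0` and `∞`.
With `A = [0,1)^d` and `f = h(·, 0)` it reads `λ_Φ = ∫ h(0, x) dμ(x) = E[∫ h(0, z) dΦ(z)]`.
-/

section IntensityMeasure

variable {Ω X : Type*} [MeasurableSpace Ω] [MeasurableSpace X] {P P' : Measure Ω}
  {Φ : Ω → Measure X}

/-- The intensity measure `A ↦ E[Φ(A)]` of a random measure `Φ` under `P`. -/
def intensityMeasure (P : Measure Ω) (Φ : Ω → Measure X) : Measure X := P.bind Φ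

lemma intensityMeasure_apply (hΦ : AEMeasurable Φ P) {A : Set X} (hA : MeasurableSet A) :
    intensityMeasure P Φ A = ∫⁻ ω, Φ ω A ∂P :=
  Measure.bind_apply hA hΦ

lemma lintegral_intensityMeasure (hΦ : AEMeasurable Φ P) {f : X → ℝ≥0∞} (hf : Measurable f) :
    ∫⁻ x, f x ∂intensityMeasure P Φ = ∫⁻ ω, ∫⁻ x, f x ∂Φ ω ∂P :=
  Measure.lintegral_bind hΦ hf.aemeasurable

lemma map_intensityMeasure_eq_self (hΦ : AEMeasurable Φ P) {f : X → X} (hf : Measurable f)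
    (hinv : P.map (fun ω => (Φ ω).map f) = P.map Φ) :
    (intensityMeasure P Φ).map f = intensityMeasure P Φ := by
  calc (intensityMeasure P Φ).map f
      = ((P.map Φ).map (Measure.map f)).join := (Measure.join_map_map hf _).symm
    _ = (P.map fun ω => (Φ ω).map f).join := by
        rw [AEMeasurable.map_map_of_aemeasurable (Measure.measurable_map f hf).aemeasurable hΦ]
        rfl
    _ = intensityMeasure P Φ := by rw [hinv]; rfl

lemma intensityMeasure_absolutelyContinuous (hΦ : AEMeasurable Φ P') (hP : P ≪ P') :
    intensityMeasure P Φ ≪ intensityMeasure P' Φ := by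
  refine Measure.AbsolutelyContinuous.mk fun A hA hA0 => ?_
  have hΦA : AEMeasurable (fun ω => Φ ω A) P' := (Measure.measurable_coe hA).comp_aemeasurable hΦ
  rw [intensityMeasure_apply hΦ hA, lintegral_eq_zero_iff' hΦA] at hA0
  rw [intensityMeasure_apply (hΦ.mono_ac hP) hA, lintegral_eq_zero_iff' (hΦA.mono_ac hP)]
  exact hP.ae_le hA0

lemma sFinite_restrict_intensityMeasure [SFinite P] (hΦ : AEMeasurable Φ P) {A : Set X}
    (hA : MeasurableSet A) (hfin : ∀ᵐ ω ∂P, Φ ω A < ∞) :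
    SFinite ((intensityMeasure P Φ).restrict A) := by
  obtain ⟨P₀, _, hPP₀, hP₀P⟩ := exists_isFiniteMeasure_absolutelyContinuous P
  -- Reweighting by `(1 + Φ(A))⁻¹` keeps the null sets and makes the expected mass of `A` finite.
  let w : Ω → ℝ≥0∞ := fun ω => (1 + Φ ω A)⁻¹
  have hΦ₀ : AEMeasurable Φ P₀ := hΦ.mono_ac hP₀P
  have hΦA : AEMeasurable (fun ω => Φ ω A) P₀ := (Measure.measurable_coe hA).comp_aemeasurable hΦ₀
  have hw : AEMeasurable w P₀ := (hΦA.const_add 1).inv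
  have hw0 : ∀ᵐ ω ∂P₀, w ω ≠ 0 := by
    filter_upwards [hP₀P.ae_le hfin] with ω hω
    exact ENNReal.inv_ne_zero.2 (ENNReal.add_ne_top.2 ⟨one_ne_top, hω.ne⟩)
  have hΦw : AEMeasurable Φ (P₀.withDensity w) :=
    hΦ₀.mono_ac (withDensity_absolutelyContinuous P₀ w)
  have hmass : intensityMeasure (P₀.withDensity w) Φ A < ∞ :=
    calc intensityMeasure (P₀.withDensity w) Φ A
        = ∫⁻ ω, w ω * Φ ω A ∂P₀ := by
          rw [intensityMeasure_apply hΦw hA, lintegral_withDensity_eq_lintegral_mul₀ hw hΦA]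
          rfl
      _ ≤ ∫⁻ _, 1 ∂P₀ := lintegral_mono fun ω =>
          (mul_le_mul_right le_add_self _).trans (ENNReal.inv_mul_le_one _)
      _ < ∞ := by simp
  have : IsFiniteMeasure ((intensityMeasure (P₀.withDensity w) Φ).restrict A) :=
    isFiniteMeasure_restrict.2 hmass.ne
  exact sFinite_of_absolutelyContinuous
    ((intensityMeasure_absolutelyContinuous hΦw
      (hPP₀.trans (withDensity_absolutelyContinuous' hw hw0))).restrict A)

lemma sFinite_of_forall_sFinite_restrict {ι : Type*} [Countable ι] {μ : Measure X} {A : ι → Set X}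
    (hcover : ⋃ i, A i = Set.univ) (hA : ∀ i, SFinite (μ.restrict (A i))) : SFinite μ := by
  have hμ : μ ≪ Measure.sum fun i => μ.restrict (A i) := by
    simpa only [hcover, Measure.restrict_univ] using
      (Measure.restrict_iUnion_le (μ := μ) (s := A)).absolutelyContinuous
  exact sFinite_of_absolutelyContinuous hμ

end IntensityMeasure

lemma measure_mul_lintegral_eq_measure_mul_lintegral_neg {G : Type*} [MeasurableSpace G]
    [AddGroup G] [MeasurableAdd₂ G] [MeasurableNeg G] (μ ν : Measure G) [SFinite μ] [SFinite ν]
    [μ.IsAddLeftInvariant] [ν.IsAddLeftInvariant] [ν.IsAddRightInvariant] {A : Set G}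
    (hA : MeasurableSet A) {f : G → ℝ≥0∞} (hf : Measurable f) :
    μ A * ∫⁻ x, f x ∂ν = ν A * ∫⁻ x, f (-x) ∂μ := by
  simp_rw [measure_add_lintegral_eq μ ν hA f hf, measure_preimage_add_right]
  exact lintegral_const_mul _ (hf.comp measurable_neg)

section Stationary

variable {d : ℕ} {Ω : Type*} [MeasurableSpace Ω] {P : Measure Ω} {Φ : Ω → Measure (Vec d)}

lemma measurableSet_unitBox : MeasurableSet (unitBox d) :=
  MeasurableSet.univ_pi fun _ => measurableSet_Ico

lemma volume_unitBox : volume (unitBox d) = 1 := by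
  simp [unitBox, volume_pi_pi]

lemma isAddLeftInvariant_intensityMeasure (hΦ : AEMeasurable Φ P)
    (hstat : ∀ t : Vec d, P.map (fun ω => shiftM t (Φ ω)) = P.map Φ) :
    (intensityMeasure P Φ).IsAddLeftInvariant := by
  refine ⟨fun t => ?_⟩
  simpa only [sub_neg_eq_add, add_comm] using
    map_intensityMeasure_eq_self hΦ (measurable_sub_const' (-t)) (hstat (-t))

lemma sFinite_intensityMeasure [SFinite P] (hΦ : AEMeasurable Φ P)
    (hbf : ∀ᵐ ω ∂P, BddFinite (Φ ω)) : SFinite (intensityMeasure P Φ) :=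
  sFinite_of_forall_sFinite_restrict (Metric.iUnion_ball_nat 0) fun _ =>
    sFinite_restrict_intensityMeasure hΦ measurableSet_ball <|
      hbf.mono fun _ hω => hω _ Metric.isBounded_ball

lemma intensity_mul_lintegral_eq_lintegral_lintegral_neg [SFinite P]
    (hΦ : AEMeasurable Φ P) (hbf : ∀ᵐ ω ∂P, BddFinite (Φ ω))
    (hstat : ∀ t : Vec d, P.map (fun ω => shiftM t (Φ ω)) = P.map Φ)
    {f : Vec d → ℝ≥0∞} (hf : Measurable f) :
    (∫⁻ ω, Φ ω (unitBox d) ∂P) * ∫⁻ x, f x = ∫⁻ ω, ∫⁻ z, f (-z) ∂Φ ω ∂P := by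
  have hf_neg : Measurable fun x => f (-x) := hf.comp measurable_neg
  have := isAddLeftInvariant_intensityMeasure hΦ hstat
  have := sFinite_intensityMeasure hΦ hbf
  rw [← intensityMeasure_apply hΦ measurableSet_unitBox,
    measure_mul_lintegral_eq_measure_mul_lintegral_neg _ volume measurableSet_unitBox hf,
    volume_unitBox, one_mul, lintegral_intensityMeasure hΦ hf_neg]

/-- `Q` is a disintegrating measure of the Campbell measure of `Φ`, i.e. it satisfies the refined
Campbell formula; such a `Q` is called a Palm measure of `Φ`. -/
def IsPalmMeasure (P : Measure Ω) (Φ : Ω → Measure (Vec d)) (Q : Measure (Measure (Vec d))) :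
    Prop :=
  ∀ g : Vec d → Measure (Vec d) → ℝ≥0∞,
    Measurable (fun p : Vec d × Measure (Vec d) => g p.1 p.2) →
    ∫⁻ ω, (∫⁻ x, g x (shiftM x (Φ ω)) ∂(Φ ω)) ∂P
      = ∫⁻ x, (∫⁻ ψ, g x ψ ∂Q) ∂(volume : Measure (Vec d))

lemma IsPalmMeasure.apply_mul_lintegral {Q : Measure (Measure (Vec d))} (hQ : IsPalmMeasure P Φ Q)
    {B : Set (Measure (Vec d))} (hB : MeasurableSet B) {k : Vec d → ℝ≥0∞} (hk : Measurable k) :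
    Q B * ∫⁻ x, k x =
      ∫⁻ ω, (∫⁻ z, B.indicator (fun _ => (1 : ℝ≥0∞)) (shiftM z (Φ ω)) * k z ∂(Φ ω)) ∂P := by
  have hindB : Measurable (B.indicator fun _ => (1 : ℝ≥0∞)) := measurable_const.indicator hB
  rw [hQ (fun x ψ => B.indicator (fun _ => 1) ψ * k x)
    ((hindB.comp measurable_snd).mul (hk.comp measurable_fst))]
  simp_rw [lintegral_mul_const _ hindB, lintegral_indicator_const hB, one_mul]
  exact (lintegral_const_mul _ hk).symm

lemma apply_neg_zero_eq_apply_zero {G α : Type*} [AddGroup G] {h : G → G → α}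
    (hinv : ∀ x y t : G, h (x + t) (y + t) = h x y) (z : G) : h (-z) 0 = h 0 z := by
  simpa using (hinv (-z) 0 z).symm

theorem stmt13_general [SFinite P] (hΦ : AEMeasurable Φ P) (hbf : ∀ᵐ ω ∂P, BddFinite (Φ ω))
    (hstat : ∀ t : Vec d, P.map (fun ω => shiftM t (Φ ω)) = P.map Φ)
    {h : Vec d → Vec d → ℝ≥0∞} (hhm : Measurable (fun p : Vec d × Vec d => h p.1 p.2))
    (hhinv : ∀ x y t : Vec d, h (x + t) (y + t) = h x y)
    (hh1 : ∀ y : Vec d, ∫⁻ x, h x y = 1) :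
    (∫⁻ ω, Φ ω (unitBox d) ∂P = ∫⁻ ω, (∫⁻ z, h 0 z ∂(Φ ω)) ∂P) ∧
    ∀ Q : Measure (Measure (Vec d)), IsPalmMeasure P Φ Q →
      ∀ B : Set (Measure (Vec d)), MeasurableSet B →
        Q B = ∫⁻ ω, (∫⁻ z, B.indicator (fun _ => (1 : ℝ≥0∞)) (shiftM z (Φ ω)) * h 0 z
          ∂(Φ ω)) ∂P := by
  have hneg : ∀ z, h (-z) 0 = h 0 z := apply_neg_zero_eq_apply_zero hhinv
  have hmeas_left : Measurable fun x => h x 0 := hhm.comp measurable_prodMk_right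
  have hmeas_right : Measurable fun z => h 0 z := hhm.comp measurable_prodMk_left
  refine ⟨?_, fun Q hQ B hB => ?_⟩
  · simpa only [hh1, mul_one, hneg] using
      intensity_mul_lintegral_eq_lintegral_lintegral_neg hΦ hbf hstat hmeas_left
  · have hone : ∫⁻ z, h 0 z = 1 := by
      simp_rw [← hneg]
      rw [lintegral_neg_eq_self (fun x => h x 0), hh1]
    simpa only [hone, mul_one] using hQ.apply_mul_lintegral hB hmeas_right

end Stationary

/-- explicit construction of the Palm measure.  Let `Φ` be a stationary
random measure on `ℝ^d` with intensity `λ_Φ ∈ (0,∞)`, and let `h : ℝ^d × ℝ^d → [0,∞]` be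
measurable, translation-invariant (`h (x+t) (y+t) = h x y`) with `∫ h x y dx = 1` for every
`y`.  Then `λ_Φ = E[∫ h 0 z dΦ(z)]`, and every σ-finite measure `Q` disintegrating the
Campbell measure satisfies `Q(B) = E[∫ 1_B(T_z Φ) · h 0 z dΦ(z)]` for all measurable `B`. -/
theorem stmt13 {d : ℕ} {Ω : Type*} [MeasurableSpace Ω] (P : Measure Ω) [IsProbabilityMeasure P]
    (Φ : Ω → Measure (Vec d)) (hΦm : Measurable Φ)
    (hbf : ∀ᵐ ω ∂P, BddFinite (Φ ω))
    (hstat : ∀ t : Vec d, P.map (fun ω => shiftM t (Φ ω)) = P.map Φ)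
    (hpos : 0 < ∫⁻ ω, Φ ω (unitBox d) ∂P)
    (hfin : (∫⁻ ω, Φ ω (unitBox d) ∂P) < ⊤)
    (h : Vec d → Vec d → ℝ≥0∞)
    (hhm : Measurable (fun p : Vec d × Vec d => h p.1 p.2))
    (hhinv : ∀ x y t : Vec d, h (x + t) (y + t) = h x y)
    (hh1 : ∀ y : Vec d, ∫⁻ x, h x y ∂(volume : Measure (Vec d)) = 1) :
    (∫⁻ ω, Φ ω (unitBox d) ∂P = ∫⁻ ω, (∫⁻ z, h 0 z ∂(Φ ω)) ∂P) ∧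
    ∀ Q : Measure (Measure (Vec d)), SigmaFinite Q →
      (∀ g : Vec d → Measure (Vec d) → ℝ≥0∞,
        Measurable (fun p : Vec d × Measure (Vec d) => g p.1 p.2) →
        ∫⁻ ω, (∫⁻ x, g x (shiftM x (Φ ω)) ∂(Φ ω)) ∂P
          = ∫⁻ x, (∫⁻ ψ, g x ψ ∂Q) ∂(volume : Measure (Vec d))) →
      ∀ B : Set (Measure (Vec d)), MeasurableSet B →
        Q B = ∫⁻ ω, (∫⁻ z, B.indicator (fun _ => (1 : ℝ≥0∞)) (shiftM z (Φ ω)) * h 0 z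
          ∂(Φ ω)) ∂P := by
  have general := stmt13_general hΦm.aemeasurable hbf hstat hhm hhinv hh1
  exact ⟨general.1, fun Q _ => general.2 Q⟩
end
end

section
/- Let (Φ, Ψ) be a jointly stationary pair of random measures on ℝ^d (the law of (T_tΦ, T_tΨ) equals the law of (Φ, Ψ) for every t) with intensities λ_Φ := E[Φ([0,1)^d)] and λ_Ψ := E[Ψ([0,1)^d)] both in (0,∞), and assume the pair is ergodic: every measurable set A ⊆ M(ℝ^d) × M(ℝ^d) that is invariant under the diagonal shift action of ℝ^d satisfies P((Φ,Ψ) ∈ A) ∈ {0,1}. Then the following are equivalent: (a) λ_Φ = λ_Ψ; (b) there exists a translation-covariant measurable function K : M(ℝ^d) × M(ℝ^d) × ℝ^d × ℝ^d → [0,∞) (i.e. K(T_tφ, T_tψ, x − t, y − t) = K(φ, ψ, x, y)) such that almost surely ∫ K(Φ, Ψ, x, y) dΨ(y) = 1 for Φ-almost every x and ∫ K(Φ, Ψ, x, y) dΦ(x) = 1 for Ψ-almost every y (a balancing transport density from Φ to Ψ). -/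
open MeasureTheory ENNReal

noncomputable section

/-!
A balancing density transports all of `Φ` onto `Ψ`, so the mass transport principle makes the two
intensities equal.

Conversely, let `Φ` send mass to `Ψ` in rounds along a strictly positive, symmetric, covariant
density, each round proportional to what is still available at the source and still missing at the
target.  Two points left with a positive fraction on either side would have exchanged infinite mass,
so only one of the two measures can have a leftover; by ergodicity it is almost surely the same one.
By mass transport, equal intensities force equal intensities of the leftovers, so both vanish.
-/

open ProbabilityTheory

section MeasurableInKernel

variable {X E F : Type*} [MeasurableSpace X] [MeasurableSpace E] [MeasurableSpace F]

lemma measurable_lintegral_kernel_right (κ : Kernel X F) [IsSFiniteKernel κ]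
    {f : X × E × F → ℝ≥0∞} (hf : Measurable f) :
    Measurable fun q : X × E => ∫⁻ y, f (q.1, q.2, y) ∂κ q.1 :=
  Measurable.lintegral_kernel_prod_right' (κ := κ.prodMkRight E)
    (hf.comp (f := fun r : (X × E) × F => (r.1.1, r.1.2, r.2)) (by fun_prop))

lemma lintegral_compProd_prod {μ : Measure X} [SFinite μ] (κ : Kernel X E) (η : Kernel X F)
    [IsSFiniteKernel κ] [IsSFiniteKernel η]
    {f : X × E × F → ℝ≥0∞} (hf : Measurable f) :
    ∫⁻ z, f z ∂(μ ⊗ₘ (κ ×ₖ η)) = ∫⁻ p, ∫⁻ x, ∫⁻ y, f (p, x, y) ∂η p ∂κ p ∂μ := by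
  rw [Measure.lintegral_compProd hf]
  exact lintegral_congr fun p => Kernel.lintegral_prod _ _ _ (by fun_prop)

lemma isSFiniteKernel_of_isFiniteMeasure (κ : Kernel X E) [∀ p, IsFiniteMeasure (κ p)] :
    IsSFiniteKernel κ := by
  have hmass : Measurable fun p => κ p Set.univ := κ.measurable_coe MeasurableSet.univ
  let normalized : Kernel X E :=
    ⟨fun p => (κ p Set.univ)⁻¹ • κ p, Measure.measurable_of_measurable_coe _ fun s hs =>
      hmass.inv.mul (κ.measurable_coe hs)⟩
  have : IsFiniteKernel normalized := ⟨1, one_lt_top, fun p => ENNReal.inv_mul_le_one _⟩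
  have hdensity : Measurable (Function.uncurry fun (p : X) (_ : E) => κ p Set.univ) :=
    hmass.comp measurable_fst
  have hκ : normalized.withDensity (fun p _ => κ p Set.univ) = κ := by
    ext1 p
    rw [Kernel.withDensity_apply _ hdensity, withDensity_const]
    change κ p Set.univ • (κ p Set.univ)⁻¹ • κ p = κ p
    obtain hzero | hzero := eq_or_ne (κ p) 0
    · simp [hzero]
    · rw [smul_smul, ENNReal.mul_inv_cancel (by simpa using hzero) (measure_ne_top _ _), one_smul]
  rw [← hκ]
  exact Kernel.IsSFiniteKernel.withDensity _ fun p _ => measure_ne_top _ _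

lemma isSFiniteKernel_of_iUnion_eq_univ (κ : Kernel X E) {s : ℕ → Set E}
    (hs : ∀ n, MeasurableSet (s n)) (hs_univ : ⋃ n, s n = Set.univ)
    (hκs : ∀ p n, κ p (s n) ≠ ⊤) : IsSFiniteKernel κ := by
  have hmeas : ∀ n, MeasurableSet (disjointed s n) := MeasurableSet.disjointed hs
  have hpiece : ∀ n, IsSFiniteKernel (κ.restrict (hmeas n)) := fun n => by
    have : ∀ p, IsFiniteMeasure (κ.restrict (hmeas n) p) := fun p =>
      ⟨by simpa [Kernel.restrict_apply] using
        (measure_mono (disjointed_subset s n)).trans_lt (hκs p n).lt_top⟩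
    exact isSFiniteKernel_of_isFiniteMeasure _
  have hsum : Kernel.sum (fun n => κ.restrict (hmeas n)) = κ := by
    ext1 p
    simp only [Kernel.sum_apply, Kernel.restrict_apply]
    rw [← Measure.restrict_iUnion (disjoint_disjointed s) hmeas, iUnion_disjointed, hs_univ,
      Measure.restrict_univ]
  exact hsum ▸ Kernel.isSFiniteKernel_sum

end MeasurableInKernel

section Greedy

variable {E : Type*} [MeasurableSpace E] {μ ν : Measure E} {c : E → E → ℝ≥0∞}

/-- The fraction of the mass of `μ` at `x` that is still untransported after `n` rounds of the
greedy transport of `μ` to `ν` along `c`: in each round `x` sends to `y` the density `c x y`, scaled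
by the fractions still available at `x` and still missing at `y`.  The latter is the untransported
fraction of the reversed transport, from `ν` to `μ` along `flip c`. -/
def unsent : ℕ → Measure E → Measure E → (E → E → ℝ≥0∞) → E → ℝ≥0∞
  | 0, _, _, _, _ => 1
  | n + 1, μ, ν, c, x =>
    unsent n μ ν c x - ∫⁻ y, unsent n μ ν c x * unsent n ν μ (flip c) y * c x y ∂ν

/-- The density transported in round `n` of the greedy transport. -/
def greedyStep (n : ℕ) (μ ν : Measure E) (c : E → E → ℝ≥0∞) (x y : E) : ℝ≥0∞ :=
  unsent n μ ν c x * unsent n ν μ (flip c) y * c x y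

/-- The density transported by all rounds of the greedy transport together. -/
def greedyTransport (μ ν : Measure E) (c : E → E → ℝ≥0∞) (x y : E) : ℝ≥0∞ :=
  ∑' n, greedyStep n μ ν c x y

/-- The fraction of the mass of `μ` at `x` that the greedy transport never sends away. -/
def greedyDeficit (μ ν : Measure E) (c : E → E → ℝ≥0∞) (x : E) : ℝ≥0∞ :=
  ⨅ n, unsent n μ ν c x

lemma unsent_succ (n : ℕ) (μ ν : Measure E) (c : E → E → ℝ≥0∞) (x : E) :
    unsent (n + 1) μ ν c x = unsent n μ ν c x - ∫⁻ y, greedyStep n μ ν c x y ∂ν :=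
  rfl

lemma unsent_le_one (n : ℕ) (x : E) : unsent n μ ν c x ≤ 1 := by
  induction n with
  | zero => exact le_rfl
  | succ n ih => exact tsub_le_self.trans ih

lemma greedyStep_flip (n : ℕ) (x y : E) :
    greedyStep n ν μ (flip c) y x = greedyStep n μ ν c x y := by
  simp only [greedyStep, flip_flip, flip, mul_comm (unsent n ν μ _ y)]

lemma greedyTransport_flip (x y : E) :
    greedyTransport ν μ (flip c) y x = greedyTransport μ ν c x y :=
  tsum_congr fun n => greedyStep_flip n x y

lemma lintegral_greedyStep_le (n : ℕ) {x : E} (hcx : ∫⁻ y, c x y ∂ν ≤ 1) :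
    ∫⁻ y, greedyStep n μ ν c x y ∂ν ≤ unsent n μ ν c x :=
  calc ∫⁻ y, greedyStep n μ ν c x y ∂ν ≤ ∫⁻ y, unsent n μ ν c x * c x y ∂ν := by
        refine lintegral_mono fun y => ?_
        unfold greedyStep
        gcongr
        exact mul_le_of_le_one_right' (unsent_le_one n y)
    _ = unsent n μ ν c x * ∫⁻ y, c x y ∂ν :=
        lintegral_const_mul' _ _ (ne_top_of_le_ne_top one_ne_top (unsent_le_one n x))
    _ ≤ unsent n μ ν c x := mul_le_of_le_one_right' hcx

lemma tsum_add_iInf_eq_of_succ_eq_tsub {a k : ℕ → ℝ≥0∞} (hk : ∀ n, k n ≤ a n)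
    (ha : ∀ n, a (n + 1) = a n - k n) : ∑' n, k n + ⨅ n, a n = a 0 := by
  have hanti : Antitone a := antitone_nat_of_succ_le fun n => (ha n).trans_le tsub_le_self
  have hpartial : ∀ n, ∑ i ∈ Finset.range n, k i + a n = a 0 := fun n => by
    induction n with
    | zero => simp
    | succ n ih => rw [Finset.sum_range_succ, ha, add_assoc, add_tsub_cancel_of_le (hk n), ih]
  have hlim := (ENNReal.summable (f := k)).hasSum.tendsto_sum_nat.add (tendsto_atTop_iInf hanti)
  simp only [hpartial] at hlim
  exact tendsto_nhds_unique hlim tendsto_const_nhds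

section Measurability

variable {X : Type*} [MeasurableSpace X] (κ η : Kernel X E) [IsSFiniteKernel κ] [IsSFiniteKernel η]
  {d : X → E → E → ℝ≥0∞}

lemma measurable_unsent_kernel (hd : Measurable fun q : X × E × E => d q.1 q.2.1 q.2.2) (n : ℕ) :
    Measurable fun q : X × E => unsent n (κ q.1) (η q.1) (d q.1) q.2 := by
  induction n generalizing κ η d with
  | zero => exact measurable_const
  | succ n ih =>
    have hswap : Measurable fun q : X × E × E => flip (d q.1) q.2.1 q.2.2 :=
      hd.comp (f := fun q : X × E × E => (q.1, q.2.2, q.2.1)) (by fun_prop)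
    have hx := (ih κ η hd).comp (f := fun q : X × E × E => (q.1, q.2.1)) (by fun_prop)
    have hy := (ih η κ (d := fun p => flip (d p)) hswap).comp
      (f := fun q : X × E × E => (q.1, q.2.2)) (by fun_prop)
    have hsent := measurable_lintegral_kernel_right η ((hx.mul hy).mul hd)
    exact (ih κ η hd).sub hsent

lemma measurable_greedyStep_kernel (hd : Measurable fun q : X × E × E => d q.1 q.2.1 q.2.2)
    (n : ℕ) : Measurable fun q : X × E × E =>
      greedyStep n (κ q.1) (η q.1) (d q.1) q.2.1 q.2.2 := by
  have hswap : Measurable fun q : X × E × E => flip (d q.1) q.2.1 q.2.2 :=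
    hd.comp (f := fun q : X × E × E => (q.1, q.2.2, q.2.1)) (by fun_prop)
  have hx := (measurable_unsent_kernel κ η hd n).comp
    (f := fun q : X × E × E => (q.1, q.2.1)) (by fun_prop)
  have hy := (measurable_unsent_kernel η κ (d := fun p => flip (d p)) hswap n).comp
    (f := fun q : X × E × E => (q.1, q.2.2)) (by fun_prop)
  exact (hx.mul hy).mul hd

lemma measurable_greedyTransport_kernel
    (hd : Measurable fun q : X × E × E => d q.1 q.2.1 q.2.2) :
    Measurable fun q : X × E × E => greedyTransport (κ q.1) (η q.1) (d q.1) q.2.1 q.2.2 :=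
  Measurable.tsum fun n => measurable_greedyStep_kernel κ η hd n

lemma measurable_greedyDeficit_kernel
    (hd : Measurable fun q : X × E × E => d q.1 q.2.1 q.2.2) :
    Measurable fun q : X × E => greedyDeficit (κ q.1) (η q.1) (d q.1) q.2 :=
  Measurable.iInf fun n => measurable_unsent_kernel κ η hd n

end Measurability

lemma measurable_greedyStep [SFinite μ] [SFinite ν] (hc : Measurable (Function.uncurry c)) (n : ℕ)
    (x : E) : Measurable (greedyStep n μ ν c x) :=
  (measurable_greedyStep_kernel (Kernel.const Unit μ) (Kernel.const Unit ν) (d := fun _ => c)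
    (hc.comp measurable_snd) n).comp (f := fun y : E => ((), x, y)) (by fun_prop)

lemma lintegral_greedyTransport_add_greedyDeficit [SFinite μ] [SFinite ν]
    (hc : Measurable (Function.uncurry c)) {x : E} (hcx : ∫⁻ y, c x y ∂ν ≤ 1) :
    ∫⁻ y, greedyTransport μ ν c x y ∂ν + greedyDeficit μ ν c x = 1 := by
  unfold greedyTransport
  rw [lintegral_tsum fun n => (measurable_greedyStep hc n x).aemeasurable]
  exact tsum_add_iInf_eq_of_succ_eq_tsub (a := fun n => unsent n μ ν c x)
    (fun n => lintegral_greedyStep_le n hcx) (fun n => unsent_succ n μ ν c x)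

lemma greedyTransport_eq_top {x y : E} (hx : greedyDeficit μ ν c x ≠ 0)
    (hy : greedyDeficit ν μ (flip c) y ≠ 0) (hcxy : c x y ≠ 0) :
    greedyTransport μ ν c x y = ⊤ := by
  refine top_unique ?_
  rw [← ENNReal.tsum_const_eq_top_of_ne_zero (α := ℕ) (mul_ne_zero (mul_ne_zero hx hy) hcxy)]
  refine ENNReal.tsum_le_tsum fun n => ?_
  unfold greedyStep
  gcongr <;> exact iInf_le _ n

lemma greedyDeficit_eq_zero_or_ae_eq_zero [SFinite μ] [SFinite ν]
    (hc : Measurable (Function.uncurry c)) (hcν : ∀ x, ∫⁻ y, c x y ∂ν ≤ 1)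
    (hc0 : ∀ x y, c x y ≠ 0) :
    (∀ x, greedyDeficit μ ν c x = 0) ∨ ∀ᵐ y ∂ν, greedyDeficit ν μ (flip c) y = 0 := by
  refine or_iff_not_imp_left.2 fun hpos => ?_
  push Not at hpos
  obtain ⟨x, hx⟩ := hpos
  have hint : ∫⁻ y, greedyTransport μ ν c x y ∂ν ≠ ⊤ :=
    ne_top_of_le_ne_top one_ne_top <|
      le_self_add.trans_eq (lintegral_greedyTransport_add_greedyDeficit hc (hcν x))
  have hmeas : Measurable (greedyTransport μ ν c x) :=
    Measurable.tsum fun n => measurable_greedyStep hc n x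
  filter_upwards [ae_lt_top hmeas hint] with y hy
  by_contra hdef
  exact hy.ne (greedyTransport_eq_top hx hdef (hc0 x y))

section Map

variable {F : Type*} [MeasurableSpace F] (e : E ≃ᵐ F) (μ ν : Measure E)

lemma unsent_map (n : ℕ) (c : F → F → ℝ≥0∞) (x : E) :
    unsent n (μ.map e) (ν.map e) c (e x) = unsent n μ ν (fun x y => c (e x) (e y)) x := by
  induction n generalizing μ ν c x with
  | zero => rfl
  | succ n ih =>
    simp only [unsent, lintegral_map_equiv, ih]
    rfl

lemma greedyTransport_map (c : F → F → ℝ≥0∞) (x y : E) :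
    greedyTransport (μ.map e) (ν.map e) c (e x) (e y) =
      greedyTransport μ ν (fun x y => c (e x) (e y)) x y := by
  simp only [greedyTransport, greedyStep, unsent_map]
  rfl

lemma greedyDeficit_map (c : F → F → ℝ≥0∞) (x : E) :
    greedyDeficit (μ.map e) (ν.map e) c (e x) =
      greedyDeficit μ ν (fun x y => c (e x) (e y)) x := by
  simp only [greedyDeficit, unsent_map]

end Map

end Greedy

section BallDensity

variable {E : Type*} [PseudoMetricSpace E] [MeasurableSpace E]

/-- A strictly positive density of total `ν`-mass at most one, depending on `ν` and on the centre
`x` only through the metric: a mixture over `r : ℕ` of the uniform densities on the balls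
`closedBall x r`, each normalised by `1 + ν (closedBall x r)` so as never to divide by zero. -/
def ballDensity (ν : Measure E) (x y : E) : ℝ≥0∞ :=
  ∑' r : ℕ, (Metric.closedBall x r).indicator
    (fun _ => 2⁻¹ ^ (r + 1) * (1 + ν (Metric.closedBall x r))⁻¹) y

lemma tsum_two_inv_pow_succ : ∑' r : ℕ, (2⁻¹ : ℝ≥0∞) ^ (r + 1) = 1 := by
  rw [ENNReal.tsum_geometric_add_one, ENNReal.one_sub_inv_two, inv_inv,
    ENNReal.inv_mul_cancel two_ne_zero ofNat_ne_top]

lemma ballDensity_le_one (ν : Measure E) (x y : E) : ballDensity ν x y ≤ 1 := by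
  rw [← tsum_two_inv_pow_succ]
  refine ENNReal.tsum_le_tsum fun r => (Set.indicator_le_self _ _ y).trans ?_
  exact mul_le_of_le_one_right' (ENNReal.inv_le_one.2 le_self_add)

lemma ballDensity_ne_zero {ν : Measure E} (hν : ∀ x r, ν (Metric.closedBall x r) ≠ ⊤) (x y : E) :
    ballDensity ν x y ≠ 0 := by
  obtain ⟨r, hr⟩ := exists_nat_ge (dist y x)
  refine fun hzero => ?_
  have := ENNReal.tsum_eq_zero.1 hzero r
  simp [hr, hν] at this

lemma lintegral_ballDensity_le_one [OpensMeasurableSpace E] (ν : Measure E) (x : E) :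
    ∫⁻ y, ballDensity ν x y ∂ν ≤ 1 := by
  have hball : ∀ r : ℕ, MeasurableSet (Metric.closedBall x (r : ℝ)) := fun r =>
    Metric.isClosed_closedBall.measurableSet
  unfold ballDensity
  rw [← tsum_two_inv_pow_succ,
    lintegral_tsum fun r => (measurable_const.indicator (hball r)).aemeasurable]
  refine ENNReal.tsum_le_tsum fun r => ?_
  rw [lintegral_indicator_const (hball r), mul_assoc]
  refine mul_le_of_le_one_right' ?_
  rw [mul_comm, ← div_eq_mul_inv]
  exact ENNReal.div_le_of_le_mul (by simp)

lemma ballDensity_map {F : Type*} [PseudoMetricSpace F] [MeasurableSpace F] [OpensMeasurableSpace F]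
    {e : E → F} (he : Isometry e) (hem : Measurable e) (ν : Measure E) (x y : E) :
    ballDensity (ν.map e) (e x) (e y) = ballDensity ν x y := by
  simp only [ballDensity, Set.indicator, Metric.mem_closedBall, he.dist_eq,
    Measure.map_apply hem Metric.isClosed_closedBall.measurableSet, he.preimage_closedBall]

lemma measurable_ballDensity_kernel [SecondCountableTopology E] [OpensMeasurableSpace E]
    {X : Type*} [MeasurableSpace X] (κ : Kernel X E) [IsSFiniteKernel κ] :
    Measurable fun q : X × E × E => ballDensity (κ q.1) q.2.1 q.2.2 := by
  have hball : ∀ r : ℕ, Measurable fun q : X × E => κ q.1 (Metric.closedBall q.2 r) := fun r => by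
    have hset : MeasurableSet {q : (X × E) × E | dist q.2 q.1.2 ≤ r} :=
      measurableSet_le (by fun_prop) measurable_const
    exact Kernel.measurable_kernel_prodMk_left (κ := κ.prodMkRight E) hset
  refine Measurable.tsum fun r => ?_
  have hmem : MeasurableSet {q : X × E × E | dist q.2.2 q.2.1 ≤ r} :=
    measurableSet_le (by fun_prop) measurable_const
  refine Measurable.ite hmem ?_ measurable_const
  exact (((hball r).comp (f := fun q : X × E × E => (q.1, q.2.1)) (by fun_prop)).const_add
    1).inv.const_mul _

end BallDensity

section Balancing

variable {E : Type*} [MeasurableSpace E]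

/-- `k` is a balancing transport density from `μ` to `ν`: it spreads the mass of almost every point
of `μ` over `ν`, and fills almost every point of `ν` exactly. -/
def IsBalancing (μ ν : Measure E) (k : E → E → ℝ≥0∞) : Prop :=
  (∀ᵐ x ∂μ, ∫⁻ y, k x y ∂ν = 1) ∧ ∀ᵐ y ∂ν, ∫⁻ x, k x y ∂μ = 1

lemma lintegral_toNNReal_eq {ρ : Measure E} {f : E → ℝ≥0∞} (hf : Measurable f)
    (hfin : ∫⁻ z, f z ∂ρ ≠ ⊤) : ∫⁻ z, (f z).toNNReal ∂ρ = ∫⁻ z, f z ∂ρ :=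
  lintegral_congr_ae ((ae_lt_top hf hfin).mono fun _ hz => coe_toNNReal hz.ne)

lemma IsBalancing.toNNReal {μ ν : Measure E} {k : E → E → ℝ≥0∞}
    (hk : Measurable (Function.uncurry k)) (hbal : IsBalancing μ ν k) :
    IsBalancing μ ν fun x y => (k x y).toNNReal := by
  refine ⟨hbal.1.mono fun x hx => ?_, hbal.2.mono fun y hy => ?_⟩
  · exact (lintegral_toNNReal_eq hk.of_uncurry_left (hx.trans_ne one_ne_top)).trans hx
  · exact (lintegral_toNNReal_eq hk.of_uncurry_right (hy.trans_ne one_ne_top)).trans hy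

lemma measurableSet_setOf_forall_ae_eq_one {X : Type*} [MeasurableSpace X] (κ : Kernel X E)
    [IsSFiniteKernel κ] {f : X × E → ℝ≥0∞} (hf : Measurable f) :
    MeasurableSet {p | ∀ᵐ x ∂κ p, f (p, x) = 1} :=
  Kernel.measurable_kernel_prodMk_left (hf (measurableSet_singleton 1)).compl
    (measurableSet_singleton 0)

lemma measurableSet_setOf_isBalancing {X : Type*} [MeasurableSpace X] (κ η : Kernel X E)
    [IsSFiniteKernel κ] [IsSFiniteKernel η] {k : X → E → E → ℝ≥0∞}
    (hk : Measurable fun q : X × E × E => k q.1 q.2.1 q.2.2) :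
    MeasurableSet {p | IsBalancing (κ p) (η p) (k p)} :=
  (measurableSet_setOf_forall_ae_eq_one κ (measurable_lintegral_kernel_right η hk)).inter <|
    measurableSet_setOf_forall_ae_eq_one η <| measurable_lintegral_kernel_right κ <|
      hk.comp (f := fun q : X × E × E => (q.1, q.2.2, q.2.1)) (by fun_prop)

end Balancing

section GreedyDensity

variable {E : Type*} [PseudoMetricSpace E] [MeasurableSpace E]

/-- The density along which `μ` is transported to `ν`: the product of the two ball densities, which
is symmetric and has both marginals at most one. -/
def proposalDensity (μ ν : Measure E) (x y : E) : ℝ≥0∞ :=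
  ballDensity ν x y * ballDensity μ y x

/-- The greedy transport density of `μ` to `ν` along `proposalDensity μ ν`. -/
def greedyDensity (μ ν : Measure E) : E → E → ℝ≥0∞ :=
  greedyTransport μ ν (proposalDensity μ ν)

/-- The fraction of the mass of `μ` at each point that `greedyDensity μ ν` leaves untransported. -/
def deficit (μ ν : Measure E) : E → ℝ≥0∞ :=
  greedyDeficit μ ν (proposalDensity μ ν)

variable {μ ν : Measure E}

lemma flip_proposalDensity (μ ν : Measure E) :
    flip (proposalDensity μ ν) = proposalDensity ν μ := by
  funext y x
  exact mul_comm _ _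

lemma greedyDensity_swap (μ ν : Measure E) (x y : E) :
    greedyDensity ν μ y x = greedyDensity μ ν x y := by
  unfold greedyDensity
  rw [← flip_proposalDensity, greedyTransport_flip]

lemma lintegral_proposalDensity_le_one [OpensMeasurableSpace E] (μ ν : Measure E) (x : E) :
    ∫⁻ y, proposalDensity μ ν x y ∂ν ≤ 1 :=
  (lintegral_mono fun y => mul_le_of_le_one_right' (ballDensity_le_one μ y x)).trans
    (lintegral_ballDensity_le_one ν x)

section Measurability

variable [SecondCountableTopology E] [OpensMeasurableSpace E]
variable {X : Type*} [MeasurableSpace X] (κ η : Kernel X E) [IsSFiniteKernel κ] [IsSFiniteKernel η]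

lemma measurable_proposalDensity_kernel :
    Measurable fun q : X × E × E => proposalDensity (κ q.1) (η q.1) q.2.1 q.2.2 :=
  (measurable_ballDensity_kernel η).mul <| (measurable_ballDensity_kernel κ).comp
    (f := fun q : X × E × E => (q.1, q.2.2, q.2.1)) (by fun_prop)

lemma measurable_greedyDensity_kernel :
    Measurable fun q : X × E × E => greedyDensity (κ q.1) (η q.1) q.2.1 q.2.2 :=
  measurable_greedyTransport_kernel κ η (d := fun p => proposalDensity (κ p) (η p))
    (measurable_proposalDensity_kernel κ η)

lemma measurable_deficit_kernel :
    Measurable fun q : X × E => deficit (κ q.1) (η q.1) q.2 :=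
  measurable_greedyDeficit_kernel κ η (d := fun p => proposalDensity (κ p) (η p))
    (measurable_proposalDensity_kernel κ η)

lemma measurable_proposalDensity (μ ν : Measure E) [SFinite μ] [SFinite ν] :
    Measurable (Function.uncurry (proposalDensity μ ν)) :=
  (measurable_proposalDensity_kernel (Kernel.const Unit μ) (Kernel.const Unit ν)).comp
    (f := fun q : E × E => ((), q)) (by fun_prop)

lemma measurable_deficit (μ ν : Measure E) [SFinite μ] [SFinite ν] : Measurable (deficit μ ν) :=
  (measurable_deficit_kernel (Kernel.const Unit μ) (Kernel.const Unit ν)).comp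
    (f := fun x : E => ((), x)) (by fun_prop)

end Measurability

lemma lintegral_deficit_eq_zero_iff [SecondCountableTopology E] [OpensMeasurableSpace E]
    [SFinite μ] [SFinite ν] : ∫⁻ x, deficit μ ν x ∂μ = 0 ↔ ∀ᵐ x ∂μ, deficit μ ν x = 0 :=
  lintegral_eq_zero_iff (measurable_deficit μ ν)

lemma lintegral_greedyDensity_add_deficit [SecondCountableTopology E] [OpensMeasurableSpace E]
    (μ ν : Measure E) [SFinite μ] [SFinite ν] (x : E) :
    ∫⁻ y, greedyDensity μ ν x y ∂ν + deficit μ ν x = 1 :=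
  lintegral_greedyTransport_add_greedyDeficit (measurable_proposalDensity μ ν)
    (lintegral_proposalDensity_le_one μ ν x)

lemma lintegral_weight_mul_transported_add_deficit [SecondCountableTopology E]
    [OpensMeasurableSpace E] [SFinite μ] [SFinite ν] {w : E → ℝ≥0∞} (hw : Measurable w) :
    ∫⁻ x, w x * ∫⁻ y, greedyDensity μ ν x y ∂ν ∂μ + ∫⁻ x, w x * deficit μ ν x ∂μ =
      ∫⁻ x, w x ∂μ := by
  rw [← lintegral_add_right _ (by have := measurable_deficit μ ν; fun_prop)]
  simp only [← mul_add, lintegral_greedyDensity_add_deficit, mul_one]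

lemma isBalancing_greedyDensity [SecondCountableTopology E] [OpensMeasurableSpace E]
    [SFinite μ] [SFinite ν] (hμ : ∀ᵐ x ∂μ, deficit μ ν x = 0)
    (hν : ∀ᵐ y ∂ν, deficit ν μ y = 0) :
    IsBalancing μ ν (greedyDensity μ ν) := by
  refine ⟨hμ.mono fun x hx => ?_, hν.mono fun y hy => ?_⟩
  · simpa only [hx, add_zero] using lintegral_greedyDensity_add_deficit μ ν x
  · simpa only [hy, add_zero, greedyDensity_swap] using lintegral_greedyDensity_add_deficit ν μ y

lemma deficit_eq_zero_or_ae_eq_zero [SecondCountableTopology E] [OpensMeasurableSpace E]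
    [SFinite μ] [SFinite ν] (hμ : ∀ x r, μ (Metric.closedBall x r) ≠ ⊤)
    (hν : ∀ x r, ν (Metric.closedBall x r) ≠ ⊤) :
    (∀ x, deficit μ ν x = 0) ∨ ∀ᵐ y ∂ν, deficit ν μ y = 0 := by
  unfold deficit
  rw [← flip_proposalDensity μ ν]
  exact greedyDeficit_eq_zero_or_ae_eq_zero (measurable_proposalDensity μ ν)
    (lintegral_proposalDensity_le_one μ ν)
    fun x y => mul_ne_zero (ballDensity_ne_zero hν x y) (ballDensity_ne_zero hμ y x)

section Map

variable {F : Type*} [PseudoMetricSpace F] [MeasurableSpace F] [OpensMeasurableSpace F]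
  {e : E ≃ᵐ F}

lemma proposalDensity_map (he : Isometry e) (μ ν : Measure E) (x y : E) :
    proposalDensity (μ.map e) (ν.map e) (e x) (e y) = proposalDensity μ ν x y := by
  simp only [proposalDensity, ballDensity_map he e.measurable]

lemma greedyDensity_map (he : Isometry e) (μ ν : Measure E) (x y : E) :
    greedyDensity (μ.map e) (ν.map e) (e x) (e y) = greedyDensity μ ν x y := by
  simp only [greedyDensity, greedyTransport_map, proposalDensity_map he]

lemma deficit_map (he : Isometry e) (μ ν : Measure E) (x : E) :
    deficit (μ.map e) (ν.map e) (e x) = deficit μ ν x := by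
  simp only [deficit, greedyDeficit_map, proposalDensity_map he]

end Map

end GreedyDensity

section Equivariant

variable {G : Type*} [AddGroup G] [MeasurableSpace G]
  {X : Type*} [MeasurableSpace X] {T : G → X → X}

/-- A kernel `κ` from a space with a flow `T` to the group `G` is equivariant if the flow acts on
the measures `κ p` by translation, with the sign convention of `shiftM`. -/
def IsEquivariant (T : G → X → X) (κ : Kernel X G) : Prop :=
  ∀ t p, κ (T t p) = (κ p).map (· - t)

variable [MeasurableSub G] {κ η : Kernel X G}

lemma IsEquivariant.lintegral_eq (hκ : IsEquivariant T κ) (t : G) (p : X) {f : G → ℝ≥0∞}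
    (hf : Measurable f) : ∫⁻ x, f x ∂κ (T t p) = ∫⁻ x, f (x - t) ∂κ p := by
  rw [hκ, lintegral_map hf (by fun_prop)]

variable {μ : Measure X} [SFinite μ] [IsSFiniteKernel κ] [IsSFiniteKernel η]

lemma IsEquivariant.measurePreserving_compProd_prod (hκ : IsEquivariant T κ)
    (hη : IsEquivariant T η) (hT : ∀ t, MeasurePreserving (T t) μ μ) (t : G) :
    MeasurePreserving (fun z : X × G × G => (T t z.1, z.2.1 - t, z.2.2 - t))
      (μ ⊗ₘ (κ ×ₖ η)) (μ ⊗ₘ (κ ×ₖ η)) := by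
  have hTm : Measurable (T t) := (hT t).measurable
  refine ⟨by fun_prop, Measure.ext_of_lintegral _ fun f hf => ?_⟩
  have hinner : Measurable fun p => ∫⁻ x, ∫⁻ y, f (p, x, y) ∂η p ∂κ p :=
    (measurable_lintegral_kernel_right η hf).lintegral_kernel_prod_right'
  rw [lintegral_map hf (by fun_prop), lintegral_compProd_prod κ η (by fun_prop),
    lintegral_compProd_prod κ η hf, ← (hT t).lintegral_comp hinner]
  refine lintegral_congr fun p => ?_
  have hfy : Measurable fun x => ∫⁻ y, f (T t p, x, y) ∂η (T t p) :=
    (measurable_lintegral_kernel_right η hf).comp measurable_prodMk_left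
  rw [hκ.lintegral_eq t p hfy]
  refine lintegral_congr fun x => ?_
  rw [hη.lintegral_eq t p (f := fun y => f (T t p, x - t, y)) (by fun_prop)]

end Equivariant

section MassTransport

variable {G : Type*} [AddCommGroup G] [MeasurableSpace G] [MeasurableAdd₂ G] [MeasurableNeg G]
  (vol : Measure G) [SFinite vol] [vol.IsAddLeftInvariant] [vol.IsNegInvariant] {w : G → ℝ≥0∞}

/-- Both sides are the average over `t` of `∫⁻ z, w (u z) * w (v z + t) * F z ∂ρ`: integrate out
`t` directly, or after the substitution `z ↦ S t z`. -/
lemma lintegral_weight_comp_mul_eq {Z : Type*} [MeasurableSpace Z] {ρ : Measure Z} [SFinite ρ]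
    {S : G → Z → Z} (hS : ∀ t, MeasurePreserving (S t) ρ ρ) {u v : Z → G} (hu : Measurable u)
    (hv : Measurable v) (hSu : ∀ t z, u (S t z) = u z - t) (hSv : ∀ t z, v (S t z) = v z - t)
    {F : Z → ℝ≥0∞} (hF : Measurable F) (hSF : ∀ t z, F (S t z) = F z) (hw : Measurable w)
    (hw_zero : ∫⁻ t, w t ∂vol ≠ 0) (hw_top : ∫⁻ t, w t ∂vol ≠ ⊤) :
    ∫⁻ z, w (u z) * F z ∂ρ = ∫⁻ z, w (v z) * F z ∂ρ := by
  rw [← ENNReal.mul_left_inj hw_zero hw_top]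
  calc (∫⁻ z, w (u z) * F z ∂ρ) * ∫⁻ t, w t ∂vol
      = ∫⁻ z, ∫⁻ t, w (u z) * F z * w (v z + t) ∂vol ∂ρ := by
        rw [← lintegral_mul_const _ (by fun_prop)]
        refine lintegral_congr fun z => ?_
        rw [lintegral_const_mul _ (by fun_prop), lintegral_add_left_eq_self]
    _ = ∫⁻ t, ∫⁻ z, w (u z) * F z * w (v z + t) ∂ρ ∂vol :=
        lintegral_lintegral_swap (by fun_prop)
    _ = ∫⁻ t, ∫⁻ z, w (v z) * F z * w (u z - t) ∂ρ ∂vol := by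
        refine lintegral_congr fun t => ?_
        rw [← (hS t).lintegral_comp (by fun_prop)]
        simp only [hSu, hSv, hSF, sub_add_cancel]
        exact lintegral_congr fun z => by ring
    _ = ∫⁻ z, ∫⁻ t, w (v z) * F z * w (u z - t) ∂vol ∂ρ :=
        lintegral_lintegral_swap (by fun_prop)
    _ = (∫⁻ z, w (v z) * F z ∂ρ) * ∫⁻ t, w t ∂vol := by
        rw [← lintegral_mul_const _ (by fun_prop)]
        refine lintegral_congr fun z => ?_
        rw [lintegral_const_mul _ (by fun_prop), lintegral_sub_left_eq_self]

variable {X : Type*} [MeasurableSpace X] {T : G → X → X} {μ : Measure X} [SFinite μ]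
  {κ η : Kernel X G} [IsSFiniteKernel κ] [IsSFiniteKernel η]

lemma mass_transport_principle (hκ : IsEquivariant T κ) (hη : IsEquivariant T η)
    (hT : ∀ t, MeasurePreserving (T t) μ μ) {k : X → G → G → ℝ≥0∞}
    (hk : Measurable fun z : X × G × G => k z.1 z.2.1 z.2.2)
    (hTk : ∀ t p x y, k (T t p) (x - t) (y - t) = k p x y) (hw : Measurable w)
    (hw_zero : ∫⁻ t, w t ∂vol ≠ 0) (hw_top : ∫⁻ t, w t ∂vol ≠ ⊤) :
    ∫⁻ p, ∫⁻ x, w x * ∫⁻ y, k p x y ∂η p ∂κ p ∂μ =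
      ∫⁻ p, ∫⁻ y, w y * ∫⁻ x, k p x y ∂κ p ∂η p ∂μ := by
  have hkx : ∀ p x, Measurable (k p x) := fun p x =>
    hk.comp (f := fun y => (p, x, y)) (by fun_prop)
  have hky : ∀ p y, Measurable fun x => k p x y := fun p y =>
    hk.comp (f := fun x => (p, x, y)) (by fun_prop)
  have hexchange := lintegral_weight_comp_mul_eq vol
    (hκ.measurePreserving_compProd_prod hη hT) (u := fun z => z.2.1) (v := fun z => z.2.2)
    (by fun_prop) (by fun_prop) (fun _ _ => rfl) (fun _ _ => rfl) hk
    (fun t z => hTk t z.1 z.2.1 z.2.2) hw hw_zero hw_top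
  rw [lintegral_compProd_prod κ η (by fun_prop), lintegral_compProd_prod κ η (by fun_prop)]
    at hexchange
  calc ∫⁻ p, ∫⁻ x, w x * ∫⁻ y, k p x y ∂η p ∂κ p ∂μ
      = ∫⁻ p, ∫⁻ x, ∫⁻ y, w x * k p x y ∂η p ∂κ p ∂μ := by
        simp only [lintegral_const_mul _ (hkx _ _)]
    _ = ∫⁻ p, ∫⁻ x, ∫⁻ y, w y * k p x y ∂η p ∂κ p ∂μ := hexchange
    _ = ∫⁻ p, ∫⁻ y, ∫⁻ x, w y * k p x y ∂κ p ∂η p ∂μ := by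
        refine lintegral_congr fun p => lintegral_lintegral_swap ?_
        have hwk : Measurable fun z : G × G => w z.2 * k p z.1 z.2 :=
          (hw.comp measurable_snd).mul (hk.comp (f := fun z : G × G => (p, z)) (by fun_prop))
        exact hwk.aemeasurable
    _ = ∫⁻ p, ∫⁻ y, w y * ∫⁻ x, k p x y ∂κ p ∂η p ∂μ := by
        simp only [lintegral_const_mul _ (hky _ _)]

/-- This is the mass transport principle between `κ` and the constant kernel `vol`. -/
lemma ae_lintegral_eq_zero_of_lintegral_weight_mul_eq_zero (hκ : IsEquivariant T κ)
    (hT : ∀ t, MeasurePreserving (T t) μ μ) {f : X → G → ℝ≥0∞}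
    (hf : Measurable fun z : X × G => f z.1 z.2) (hTf : ∀ t p x, f (T t p) (x - t) = f p x)
    (hw : Measurable w) (hw_zero : ∫⁻ t, w t ∂vol ≠ 0) (hw_top : ∫⁻ t, w t ∂vol ≠ ⊤)
    (hzero : ∫⁻ p, ∫⁻ x, w x * f p x ∂κ p ∂μ = 0) : ∀ᵐ p ∂μ, ∫⁻ x, f p x ∂κ p = 0 := by
  have hvol : IsEquivariant T (Kernel.const X vol) := fun t _ =>
    (map_sub_right_eq_self vol t).symm
  have htransport := mass_transport_principle vol hκ hvol hT (k := fun p x _ => f p x)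
    (hf.comp (f := fun z : X × G × G => (z.1, z.2.1)) (by fun_prop)) (fun t p x _ => hTf t p x)
    hw hw_zero hw_top
  have hwf : Measurable fun z : X × G => w z.2 * f z.1 z.2 := by fun_prop
  have htotal : (∫⁻ t, w t ∂vol) * ∫⁻ p, ∫⁻ x, f p x ∂κ p ∂μ = 0 :=
    calc (∫⁻ t, w t ∂vol) * ∫⁻ p, ∫⁻ x, f p x ∂κ p ∂μ
        = ∫⁻ p, ∫⁻ y, w y * ∫⁻ x, f p x ∂κ p ∂vol ∂μ := by
          simp only [lintegral_mul_const _ hw]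
          exact (lintegral_const_mul _ hf.lintegral_kernel_prod_right').symm
      _ = ∫⁻ p, ∫⁻ x, w x * (f p x * vol Set.univ) ∂κ p ∂μ := by
          simpa only [lintegral_const, Kernel.const_apply] using htransport.symm
      _ = (∫⁻ p, ∫⁻ x, w x * f p x ∂κ p ∂μ) * vol Set.univ := by
          simp only [← mul_assoc]
          rw [← lintegral_mul_const _ hwf.lintegral_kernel_prod_right']
          refine lintegral_congr fun p => lintegral_mul_const _ ?_
          exact hwf.comp measurable_prodMk_left
      _ = 0 := by rw [hzero, zero_mul]
  exact (lintegral_eq_zero_iff hf.lintegral_kernel_prod_right').1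
    ((mul_eq_zero.1 htotal).resolve_left hw_zero)

end MassTransport

section ErgodicFlow

variable {X : Type*} [MeasurableSpace X]

lemma lintegral_weight_eq_of_ae_isBalancing {G : Type*} [AddCommGroup G] [MeasurableSpace G]
    [MeasurableAdd₂ G] [MeasurableNeg G] (vol : Measure G) [SFinite vol] [vol.IsAddLeftInvariant]
    [vol.IsNegInvariant] {T : G → X → X} {μ : Measure X} [SFinite μ]
    (hT : ∀ t, MeasurePreserving (T t) μ μ) {κ η : Kernel X G} [IsSFiniteKernel κ]
    [IsSFiniteKernel η] (hκ : IsEquivariant T κ) (hη : IsEquivariant T η) {w : G → ℝ≥0∞}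
    (hw : Measurable w) (hw_zero : ∫⁻ t, w t ∂vol ≠ 0) (hw_top : ∫⁻ t, w t ∂vol ≠ ⊤)
    {k : X → G → G → ℝ≥0∞} (hk : Measurable fun z : X × G × G => k z.1 z.2.1 z.2.2)
    (hTk : ∀ t p x y, k (T t p) (x - t) (y - t) = k p x y)
    (hbal : ∀ᵐ p ∂μ, IsBalancing (κ p) (η p) (k p)) :
    ∫⁻ p, ∫⁻ x, w x ∂κ p ∂μ = ∫⁻ p, ∫⁻ y, w y ∂η p ∂μ :=
  calc ∫⁻ p, ∫⁻ x, w x ∂κ p ∂μ = ∫⁻ p, ∫⁻ x, w x * ∫⁻ y, k p x y ∂η p ∂κ p ∂μ := by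
        refine lintegral_congr_ae (hbal.mono fun p hp => lintegral_congr_ae ?_)
        exact hp.1.mono fun x hx => by simp only [hx, mul_one]
    _ = ∫⁻ p, ∫⁻ y, w y * ∫⁻ x, k p x y ∂κ p ∂η p ∂μ :=
        mass_transport_principle vol hκ hη hT hk hTk hw hw_zero hw_top
    _ = ∫⁻ p, ∫⁻ y, w y ∂η p ∂μ := by
        refine lintegral_congr_ae (hbal.mono fun p hp => lintegral_congr_ae ?_)
        exact hp.2.mono fun y hy => by simp only [hy, mul_one]

variable {G : Type*} [SeminormedAddCommGroup G] [MeasurableSpace G] [BorelSpace G]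
  {T : G → X → X} {κ η : Kernel X G}

lemma IsEquivariant.greedyDensity_covariant (hκ : IsEquivariant T κ) (hη : IsEquivariant T η)
    (t : G) (p : X) (x y : G) :
    greedyDensity (κ (T t p)) (η (T t p)) (x - t) (y - t) = greedyDensity (κ p) (η p) x y := by
  rw [hκ, hη]
  exact greedyDensity_map (e := MeasurableEquiv.subRight t) (IsometryEquiv.subRight t).isometry
    (κ p) (η p) x y

lemma IsEquivariant.deficit_covariant (hκ : IsEquivariant T κ) (hη : IsEquivariant T η)
    (t : G) (p : X) (x : G) :
    deficit (κ (T t p)) (η (T t p)) (x - t) = deficit (κ p) (η p) x := by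
  rw [hκ, hη]
  exact deficit_map (e := MeasurableEquiv.subRight t) (IsometryEquiv.subRight t).isometry
    (κ p) (η p) x

variable [SecondCountableTopology G] [IsSFiniteKernel κ] [IsSFiniteKernel η]

lemma IsEquivariant.lintegral_deficit_eq (hκ : IsEquivariant T κ) (hη : IsEquivariant T η) (t : G)
    (p : X) : ∫⁻ x, deficit (κ (T t p)) (η (T t p)) x ∂κ (T t p) =
      ∫⁻ x, deficit (κ p) (η p) x ∂κ p := by
  rw [hκ.lintegral_eq t p (measurable_deficit _ _)]
  simp only [hκ.deficit_covariant hη]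

lemma lintegral_lintegral_weight_mul_transported_add_deficit (κ η : Kernel X G) [IsSFiniteKernel κ]
    [IsSFiniteKernel η] (μ : Measure X) {w : G → ℝ≥0∞} (hw : Measurable w) :
    (∫⁻ p, ∫⁻ x, w x * ∫⁻ y, greedyDensity (κ p) (η p) x y ∂η p ∂κ p ∂μ) +
      ∫⁻ p, ∫⁻ x, w x * deficit (κ p) (η p) x ∂κ p ∂μ = ∫⁻ p, ∫⁻ x, w x ∂κ p ∂μ := by
  have hdef : Measurable fun z : X × G => w z.2 * deficit (κ z.1) (η z.1) z.2 :=
    (hw.comp measurable_snd).mul (measurable_deficit_kernel κ η)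
  rw [← lintegral_add_right _ hdef.lintegral_kernel_prod_right']
  exact lintegral_congr fun p => lintegral_weight_mul_transported_add_deficit hw

variable (vol : Measure G) [SFinite vol] [vol.IsAddLeftInvariant] [vol.IsNegInvariant]
  {μ : Measure X} [SFinite μ] {w : G → ℝ≥0∞}

lemma lintegral_weight_mul_deficit_comm (hT : ∀ t, MeasurePreserving (T t) μ μ)
    (hκ : IsEquivariant T κ) (hη : IsEquivariant T η) (hw : Measurable w)
    (hw_zero : ∫⁻ t, w t ∂vol ≠ 0) (hw_top : ∫⁻ t, w t ∂vol ≠ ⊤)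
    (hfin : ∫⁻ p, ∫⁻ y, w y ∂η p ∂μ ≠ ⊤)
    (heq : ∫⁻ p, ∫⁻ x, w x ∂κ p ∂μ = ∫⁻ p, ∫⁻ y, w y ∂η p ∂μ) :
    ∫⁻ p, ∫⁻ x, w x * deficit (κ p) (η p) x ∂κ p ∂μ =
      ∫⁻ p, ∫⁻ y, w y * deficit (η p) (κ p) y ∂η p ∂μ := by
  have hκη := lintegral_lintegral_weight_mul_transported_add_deficit κ η μ hw
  have hηκ := lintegral_lintegral_weight_mul_transported_add_deficit η κ μ hw
  have htransport := mass_transport_principle vol hκ hη hT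
    (k := fun p => greedyDensity (κ p) (η p)) (measurable_greedyDensity_kernel κ η)
    (hκ.greedyDensity_covariant hη) hw hw_zero hw_top
  simp only [greedyDensity_swap] at hηκ
  rw [htransport, heq, ← hηκ] at hκη
  exact (ENNReal.add_right_inj (ne_top_of_le_ne_top hfin (le_self_add.trans_eq hηκ))).1 hκη

lemma ae_lintegral_deficit_eq_zero_swap (hT : ∀ t, MeasurePreserving (T t) μ μ)
    (hκ : IsEquivariant T κ) (hη : IsEquivariant T η) (hw : Measurable w)
    (hw_zero : ∫⁻ t, w t ∂vol ≠ 0) (hw_top : ∫⁻ t, w t ∂vol ≠ ⊤)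
    (hfin : ∫⁻ p, ∫⁻ y, w y ∂η p ∂μ ≠ ⊤)
    (heq : ∫⁻ p, ∫⁻ x, w x ∂κ p ∂μ = ∫⁻ p, ∫⁻ y, w y ∂η p ∂μ)
    (hzero : ∀ᵐ p ∂μ, ∫⁻ x, deficit (κ p) (η p) x ∂κ p = 0) :
    ∀ᵐ p ∂μ, ∫⁻ y, deficit (η p) (κ p) y ∂η p = 0 := by
  refine ae_lintegral_eq_zero_of_lintegral_weight_mul_eq_zero vol hη hT
    (measurable_deficit_kernel η κ) (hη.deficit_covariant hκ) hw hw_zero hw_top ?_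
  rw [← lintegral_weight_mul_deficit_comm vol hT hκ hη hw hw_zero hw_top hfin heq]
  refine lintegral_eq_zero_of_ae_eq_zero (hzero.mono fun p hp => ?_)
  refine lintegral_eq_zero_of_ae_eq_zero ?_
  exact (lintegral_deficit_eq_zero_iff.1 hp).mono fun x hx => by simp [hx]

/-- By ergodicity either almost all `κ p` have zero total deficit or almost none do, and then the
deficit of `η p` vanishes instead; as the two deficits have equal intensities, both vanish. -/
lemma ae_isBalancing_greedyDensity (hT : ∀ t, MeasurePreserving (T t) μ μ)
    (hκ : IsEquivariant T κ) (hη : IsEquivariant T η)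
    (herg : ∀ A : Set X, MeasurableSet A → (∀ t p, p ∈ A ↔ T t p ∈ A) →
      (∀ᵐ p ∂μ, p ∈ A) ∨ ∀ᵐ p ∂μ, p ∉ A)
    (hκ_ball : ∀ p x r, κ p (Metric.closedBall x r) ≠ ⊤)
    (hη_ball : ∀ p x r, η p (Metric.closedBall x r) ≠ ⊤) (hw : Measurable w)
    (hw_zero : ∫⁻ t, w t ∂vol ≠ 0) (hw_top : ∫⁻ t, w t ∂vol ≠ ⊤)
    (hfin : ∫⁻ p, ∫⁻ y, w y ∂η p ∂μ ≠ ⊤)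
    (heq : ∫⁻ p, ∫⁻ x, w x ∂κ p ∂μ = ∫⁻ p, ∫⁻ y, w y ∂η p ∂μ) :
    ∀ᵐ p ∂μ, IsBalancing (κ p) (η p) (greedyDensity (κ p) (η p)) := by
  have hboth : (∀ᵐ p ∂μ, ∫⁻ x, deficit (κ p) (η p) x ∂κ p = 0) ∧
      ∀ᵐ p ∂μ, ∫⁻ y, deficit (η p) (κ p) y ∂η p = 0 := by
    obtain hzero | hpos := herg {p | ∫⁻ x, deficit (κ p) (η p) x ∂κ p = 0}
      ((measurable_deficit_kernel κ η).lintegral_kernel_prod_right' (measurableSet_singleton 0))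
      fun t p => by simp only [Set.mem_ofPred_eq, hκ.lintegral_deficit_eq hη]
    · exact ⟨hzero, ae_lintegral_deficit_eq_zero_swap vol hT hκ hη hw hw_zero hw_top hfin heq hzero⟩
    · have hzero : ∀ᵐ p ∂μ, ∫⁻ y, deficit (η p) (κ p) y ∂η p = 0 := hpos.mono fun p hp =>
        lintegral_deficit_eq_zero_iff.2 <|
          (deficit_eq_zero_or_ae_eq_zero (hκ_ball p) (hη_ball p)).resolve_left fun h =>
            hp (by simp [h])
      exact ⟨ae_lintegral_deficit_eq_zero_swap vol hT hη hκ hw hw_zero hw_top (heq ▸ hfin)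
        heq.symm hzero, hzero⟩
  filter_upwards [hboth.1, hboth.2] with p hκp hηp
  exact isBalancing_greedyDensity (lintegral_deficit_eq_zero_iff.1 hκp)
    (lintegral_deficit_eq_zero_iff.1 hηp)

theorem lintegral_weight_eq_iff_exists_isBalancing (hT : ∀ t, MeasurePreserving (T t) μ μ)
    (hκ : IsEquivariant T κ) (hη : IsEquivariant T η)
    (herg : ∀ A : Set X, MeasurableSet A → (∀ t p, p ∈ A ↔ T t p ∈ A) →
      (∀ᵐ p ∂μ, p ∈ A) ∨ ∀ᵐ p ∂μ, p ∉ A)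
    (hκ_ball : ∀ p x r, κ p (Metric.closedBall x r) ≠ ⊤)
    (hη_ball : ∀ p x r, η p (Metric.closedBall x r) ≠ ⊤) (hw : Measurable w)
    (hw_zero : ∫⁻ t, w t ∂vol ≠ 0) (hw_top : ∫⁻ t, w t ∂vol ≠ ⊤)
    (hfin : ∫⁻ p, ∫⁻ y, w y ∂η p ∂μ ≠ ⊤) :
    ∫⁻ p, ∫⁻ x, w x ∂κ p ∂μ = ∫⁻ p, ∫⁻ y, w y ∂η p ∂μ ↔
      ∃ k : X → G → G → ℝ≥0∞, (Measurable fun z : X × G × G => k z.1 z.2.1 z.2.2) ∧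
        (∀ p x y, k p x y < ⊤) ∧ (∀ t p x y, k (T t p) (x - t) (y - t) = k p x y) ∧
        ∀ᵐ p ∂μ, IsBalancing (κ p) (η p) (k p) := by
  refine ⟨fun heq => ?_, fun ⟨k, hk, _, hTk, hbal⟩ =>
    lintegral_weight_eq_of_ae_isBalancing vol hT hκ hη hw hw_zero hw_top hk hTk hbal⟩
  have hmeas := measurable_greedyDensity_kernel κ η
  refine ⟨fun p x y => (greedyDensity (κ p) (η p) x y).toNNReal,
    hmeas.ennreal_toNNReal.coe_nnreal_ennreal, fun p x y => coe_lt_top,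
    fun t p x y => by simp only [hκ.greedyDensity_covariant hη], ?_⟩
  have hbal := ae_isBalancing_greedyDensity vol hT hκ hη herg hκ_ball hη_ball hw hw_zero hw_top
    hfin heq
  exact hbal.mono fun p hp => hp.toNNReal (hmeas.comp measurable_prodMk_left)

end ErgodicFlow

section RandomMeasure

variable (G : Type*) [SeminormedAddCommGroup G] [MeasurableSpace G]

/-- The set `M(G)` of measures that are finite on bounded sets, as a subset of `Measure G`. -/
def boundedlyFinite : Set (Measure G) :=
  {ψ | ∀ s, Bornology.IsBounded s → ψ s < ⊤}

variable {G}

lemma mem_boundedlyFinite_iff_closedBall {ψ : Measure G} :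
    ψ ∈ boundedlyFinite G ↔ ∀ n : ℕ, ψ (Metric.closedBall 0 n) < ⊤ := by
  refine ⟨fun hψ n => hψ _ Metric.isBounded_closedBall, fun hψ s hs => ?_⟩
  obtain ⟨r, hr⟩ := hs.subset_closedBall 0
  obtain ⟨n, hn⟩ := exists_nat_ge r
  exact (measure_mono (hr.trans (Metric.closedBall_subset_closedBall hn))).trans_lt (hψ n)

variable [BorelSpace G]

lemma measurableSet_boundedlyFinite : MeasurableSet (boundedlyFinite G) := by
  have hball : ∀ n : ℕ, MeasurableSet {ψ : Measure G | ψ (Metric.closedBall 0 n) < ⊤} := fun n =>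
    measurableSet_lt (Measure.measurable_coe Metric.isClosed_closedBall.measurableSet)
      measurable_const
  have hInter : boundedlyFinite G = ⋂ n : ℕ, {ψ | ψ (Metric.closedBall 0 n) < ⊤} := by
    ext ψ
    simp [mem_boundedlyFinite_iff_closedBall]
  exact hInter ▸ MeasurableSet.iInter hball

lemma map_sub_right_mem_boundedlyFinite {ψ : Measure G} (t : G) :
    ψ.map (· - t) ∈ boundedlyFinite G ↔ ψ ∈ boundedlyFinite G := by
  have hmap : ∀ s, ψ.map (· - t) s = ψ ((· - t) ⁻¹' s) := (MeasurableEquiv.subRight t).map_apply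
  refine ⟨fun hψ s hs => ?_, fun hψ s hs => ?_⟩
  · have hshift : ψ.map (· - t) ((· - t) '' s) < ⊤ :=
      hψ _ ((IsometryEquiv.subRight t).isometry.lipschitz.isBounded_image hs)
    rwa [hmap, Set.preimage_image_eq s sub_left_injective] at hshift
  · rw [hmap]
    exact hψ _ ((IsometryEquiv.subRight t).isometry.antilipschitz.isBounded_preimage hs)

variable (G) in
/-- The identity of `M(G)` as a kernel, extended by the zero measure to `Measure G`: unlike the
identity of `Measure G`, it is s-finite. -/
def boundedlyFiniteKernel : Kernel (Measure G) G :=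
  ⟨(boundedlyFinite G).indicator id, measurable_id.indicator measurableSet_boundedlyFinite⟩

lemma boundedlyFiniteKernel_apply_of_mem {ψ : Measure G} (hψ : ψ ∈ boundedlyFinite G) :
    boundedlyFiniteKernel G ψ = ψ :=
  Set.indicator_of_mem hψ id

lemma boundedlyFiniteKernel_apply_of_notMem {ψ : Measure G} (hψ : ψ ∉ boundedlyFinite G) :
    boundedlyFiniteKernel G ψ = 0 :=
  Set.indicator_of_notMem hψ id

lemma boundedlyFiniteKernel_mem (ψ : Measure G) :
    boundedlyFiniteKernel G ψ ∈ boundedlyFinite G := by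
  by_cases hψ : ψ ∈ boundedlyFinite G
  · rwa [boundedlyFiniteKernel_apply_of_mem hψ]
  · rw [boundedlyFiniteKernel_apply_of_notMem hψ]
    exact fun s _ => zero_lt_top

instance : IsSFiniteKernel (boundedlyFiniteKernel G) :=
  isSFiniteKernel_of_iUnion_eq_univ _
    (fun _ => Metric.isClosed_closedBall.measurableSet)
    (Metric.iUnion_closedBall_nat 0)
    fun ψ _ => (boundedlyFiniteKernel_mem ψ _ Metric.isBounded_closedBall).ne

lemma isEquivariant_boundedlyFiniteKernel :
    IsEquivariant (fun t ψ => ψ.map (· - t)) (boundedlyFiniteKernel G) := by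
  intro t ψ
  by_cases hψ : ψ ∈ boundedlyFinite G
  · rw [boundedlyFiniteKernel_apply_of_mem hψ,
      boundedlyFiniteKernel_apply_of_mem ((map_sub_right_mem_boundedlyFinite t).2 hψ)]
  · rw [boundedlyFiniteKernel_apply_of_notMem hψ, Measure.map_zero,
      boundedlyFiniteKernel_apply_of_notMem ((map_sub_right_mem_boundedlyFinite t).not.2 hψ)]

/-- The diagonal shift of a pair of measures. -/
def shiftPair (t : G) (p : Measure G × Measure G) : Measure G × Measure G :=
  (p.1.map (· - t), p.2.map (· - t))

lemma measurable_shiftPair (t : G) : Measurable (shiftPair t) :=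
  ((Measure.measurable_map _ (measurable_sub_const t)).comp measurable_fst).prodMk
    ((Measure.measurable_map _ (measurable_sub_const t)).comp measurable_snd)

variable {Ω : Type*} [MeasurableSpace Ω] {P : Measure Ω}

lemma ae_map_mem_or_notMem [IsProbabilityMeasure P] {X : Type*} [MeasurableSpace X] {Θ : Ω → X}
    (hΘ : Measurable Θ) {A : Set X} (hA : MeasurableSet A)
    (hzero_one : P {ω | Θ ω ∈ A} = 0 ∨ P {ω | Θ ω ∈ A} = 1) :
    (∀ᵐ p ∂P.map Θ, p ∈ A) ∨ ∀ᵐ p ∂P.map Θ, p ∉ A := by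
  obtain hzero | hone := hzero_one
  · exact .inr ((ae_map_iff hΘ.aemeasurable hA.compl).2 (measure_eq_zero_iff_ae_notMem.1 hzero))
  · exact .inl ((ae_map_iff hΘ.aemeasurable hA).2 ((mem_ae_iff_prob_eq_one (hΘ hA)).2 hone))

lemma lintegral_boundedlyFiniteKernel_comap_map {X : Type*} [MeasurableSpace X] {Θ : Ω → X}
    (hΘ : Measurable Θ) {f : X → Measure G} (hf : Measurable f)
    (hbdd : ∀ᵐ ω ∂P, f (Θ ω) ∈ boundedlyFinite G) {B : Set G} (hB : MeasurableSet B) :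
    ∫⁻ p, ∫⁻ x, B.indicator 1 x ∂(boundedlyFiniteKernel G).comap f hf p ∂P.map Θ =
      ∫⁻ ω, f (Θ ω) B ∂P := by
  simp only [lintegral_indicator_one hB]
  rw [lintegral_map (Kernel.measurable_coe _ hB) hΘ]
  refine lintegral_congr_ae (hbdd.mono fun ω hω => ?_)
  simp only [Kernel.comap_apply, boundedlyFiniteKernel_apply_of_mem hω]

variable {Φ Ψ : Ω → Measure G}

lemma ae_isBalancing_boundedlyFiniteKernel_iff (hΦ : Measurable Φ) (hΨ : Measurable Ψ)
    (hΦ_bdd : ∀ᵐ ω ∂P, Φ ω ∈ boundedlyFinite G) (hΨ_bdd : ∀ᵐ ω ∂P, Ψ ω ∈ boundedlyFinite G)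
    {k : Measure G × Measure G → G → G → ℝ≥0∞}
    (hk : Measurable fun z : (Measure G × Measure G) × G × G => k z.1 z.2.1 z.2.2) :
    (∀ᵐ p ∂P.map fun ω => (Φ ω, Ψ ω),
      IsBalancing (boundedlyFiniteKernel G p.1) (boundedlyFiniteKernel G p.2) (k p)) ↔
      ∀ᵐ ω ∂P, IsBalancing (Φ ω) (Ψ ω) (k (Φ ω, Ψ ω)) := by
  have hmeas := measurableSet_setOf_isBalancing
    ((boundedlyFiniteKernel G).comap Prod.fst measurable_fst)
    ((boundedlyFiniteKernel G).comap Prod.snd measurable_snd) hk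
  refine (ae_map_iff (hΦ.prodMk hΨ).aemeasurable hmeas).trans (Filter.eventually_congr ?_)
  filter_upwards [hΦ_bdd, hΨ_bdd] with ω hΦω hΨω
  rw [Kernel.comap_apply, Kernel.comap_apply, boundedlyFiniteKernel_apply_of_mem hΦω,
    boundedlyFiniteKernel_apply_of_mem hΨω]

variable [IsProbabilityMeasure P] [SecondCountableTopology G]

theorem stmt16_general (vol : Measure G) [SFinite vol] [vol.IsAddLeftInvariant]
    [vol.IsNegInvariant] {B : Set G} (hB : MeasurableSet B) (hB_zero : vol B ≠ 0)
    (hB_top : vol B ≠ ⊤) (hΦ : Measurable Φ) (hΨ : Measurable Ψ)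
    (hΦ_bdd : ∀ᵐ ω ∂P, Φ ω ∈ boundedlyFinite G) (hΨ_bdd : ∀ᵐ ω ∂P, Ψ ω ∈ boundedlyFinite G)
    (hstat : ∀ t, P.map (fun ω => shiftPair t (Φ ω, Ψ ω)) = P.map fun ω => (Φ ω, Ψ ω))
    (herg : ∀ A : Set (Measure G × Measure G), MeasurableSet A →
      (∀ t p, p ∈ A ↔ shiftPair t p ∈ A) →
      P {ω | (Φ ω, Ψ ω) ∈ A} = 0 ∨ P {ω | (Φ ω, Ψ ω) ∈ A} = 1)
    (hfin : ∫⁻ ω, Ψ ω B ∂P ≠ ⊤) :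
    ∫⁻ ω, Φ ω B ∂P = ∫⁻ ω, Ψ ω B ∂P ↔
      ∃ K : Measure G → Measure G → G → G → ℝ≥0∞,
        Measurable (fun p : (Measure G × Measure G) × G × G => K p.1.1 p.1.2 p.2.1 p.2.2) ∧
        (∀ φ ψ x y, K φ ψ x y < ⊤) ∧
        (∀ t x y φ ψ, K (φ.map (· - t)) (ψ.map (· - t)) (x - t) (y - t) = K φ ψ x y) ∧
        ∀ᵐ ω ∂P, IsBalancing (Φ ω) (Ψ ω) (K (Φ ω) (Ψ ω)) := by
  have hpair : Measurable fun ω => (Φ ω, Ψ ω) := hΦ.prodMk hΨ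
  have hT : ∀ t, MeasurePreserving (shiftPair t) (P.map fun ω => (Φ ω, Ψ ω))
      (P.map fun ω => (Φ ω, Ψ ω)) := fun t =>
    ⟨measurable_shiftPair t, (Measure.map_map (measurable_shiftPair t) hpair).trans (hstat t)⟩
  have hball : ∀ (ψ : Measure G) x r, boundedlyFiniteKernel G ψ (Metric.closedBall x r) ≠ ⊤ :=
    fun ψ x r => (boundedlyFiniteKernel_mem ψ _ Metric.isBounded_closedBall).ne
  have hvolB : ∫⁻ t, B.indicator 1 t ∂vol = vol B := lintegral_indicator_one hB
  rw [← lintegral_boundedlyFiniteKernel_comap_map hpair measurable_snd hΨ_bdd hB] at hfin ⊢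
  rw [← lintegral_boundedlyFiniteKernel_comap_map hpair measurable_fst hΦ_bdd hB,
    lintegral_weight_eq_iff_exists_isBalancing vol hT
      (fun t p => isEquivariant_boundedlyFiniteKernel t p.1)
      (fun t p => isEquivariant_boundedlyFiniteKernel t p.2)
      (fun A hA hinv => ae_map_mem_or_notMem hpair hA (herg A hA hinv)) (fun p => hball p.1)
      (fun p => hball p.2) (measurable_one.indicator hB) (hvolB.trans_ne hB_zero)
      (hvolB.trans_ne hB_top) hfin]
  constructor
  · rintro ⟨k, hk, hk_top, hTk, hbal⟩
    exact ⟨fun φ ψ => k (φ, ψ), hk, fun φ ψ => hk_top (φ, ψ), fun t x y φ ψ => hTk t (φ, ψ) x y,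
      (ae_isBalancing_boundedlyFiniteKernel_iff hΦ hΨ hΦ_bdd hΨ_bdd hk).1 hbal⟩
  · rintro ⟨K, hK, hK_top, hTK, hbal⟩
    exact ⟨fun p => K p.1 p.2, hK, fun p => hK_top p.1 p.2, fun t p x y => hTK t x y p.1 p.2,
      (ae_isBalancing_boundedlyFiniteKernel_iff hΦ hΨ hΦ_bdd hΨ_bdd hK).2 hbal⟩

end RandomMeasure

/-- balancing transport densities.  Let `(Φ, Ψ)` be a jointly stationary
ergodic pair of random measures on `ℝ^d` with intensities `λ_Φ, λ_Ψ ∈ (0,∞)`.  Then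
`λ_Φ = λ_Ψ` iff there is a translation-covariant measurable
`K : M(ℝ^d) × M(ℝ^d) × ℝ^d × ℝ^d → [0,∞)` such that a.s. `∫ K Φ Ψ x y dΨ(y) = 1` for
`Φ`-a.e. `x` and `∫ K Φ Ψ x y dΦ(x) = 1` for `Ψ`-a.e. `y`. -/
theorem stmt16 {d : ℕ} {Ω : Type*} [MeasurableSpace Ω] (P : Measure Ω) [IsProbabilityMeasure P]
    (Φ Ψ : Ω → Measure (Vec d)) (hΦm : Measurable Φ) (hΨm : Measurable Ψ)
    (hbfΦ : ∀ᵐ ω ∂P, BddFinite (Φ ω)) (hbfΨ : ∀ᵐ ω ∂P, BddFinite (Ψ ω))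
    (hstat : ∀ t : Vec d,
      P.map (fun ω => (shiftM t (Φ ω), shiftM t (Ψ ω))) = P.map (fun ω => (Φ ω, Ψ ω)))
    (herg : ∀ A : Set (Measure (Vec d) × Measure (Vec d)), MeasurableSet A →
      (∀ (t : Vec d) (p : Measure (Vec d) × Measure (Vec d)),
        p ∈ A ↔ (shiftM t p.1, shiftM t p.2) ∈ A) →
      P {ω | (Φ ω, Ψ ω) ∈ A} = 0 ∨ P {ω | (Φ ω, Ψ ω) ∈ A} = 1)
    (lΦ lΨ : ℝ≥0∞)
    (hlΦ : lΦ = ∫⁻ ω, Φ ω (unitBox d) ∂P) (hlΨ : lΨ = ∫⁻ ω, Ψ ω (unitBox d) ∂P)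
    (hΦpos : 0 < lΦ) (hΦfin : lΦ < ⊤) (hΨpos : 0 < lΨ) (hΨfin : lΨ < ⊤) :
    lΦ = lΨ ↔
      ∃ K : Measure (Vec d) → Measure (Vec d) → Vec d → Vec d → ℝ≥0∞,
        Measurable (fun p : (Measure (Vec d) × Measure (Vec d)) × Vec d × Vec d =>
          K p.1.1 p.1.2 p.2.1 p.2.2) ∧
        (∀ (φ ψ : Measure (Vec d)) (x y : Vec d), K φ ψ x y < ⊤) ∧
        (∀ (t x y : Vec d) (φ ψ : Measure (Vec d)),
          K (shiftM t φ) (shiftM t ψ) (x - t) (y - t) = K φ ψ x y) ∧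
        ∀ᵐ ω ∂P,
          (∀ᵐ x ∂(Φ ω), ∫⁻ y, K (Φ ω) (Ψ ω) x y ∂(Ψ ω) = 1) ∧
          (∀ᵐ y ∂(Ψ ω), ∫⁻ x, K (Φ ω) (Ψ ω) x y ∂(Φ ω) = 1) := by
  have hbox : MeasurableSet (unitBox d) := MeasurableSet.univ_pi fun _ => measurableSet_Ico
  have hvol : (volume : Measure (Vec d)) (unitBox d) = 1 := by simp [unitBox, Real.volume_pi_Ico]
  subst hlΦ hlΨ
  exact stmt16_general volume hbox (by simp [hvol]) (by simp [hvol]) hΦm hΨm hbfΦ hbfΨ hstat herg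
    hΨfin.ne
end
end

section
/- Let (Y_n)_{n∈ℤ} be a sequence of ℝ^d-valued random variables with Y_0 = 0 and stationary increments, i.e. for every k ∈ ℤ the sequence (Y_{n+k} − Y_k)_{n∈ℤ} has the same law as (Y_n)_{n∈ℤ}. Assume that the random measure m := Σ_{n∈ℤ} δ_{Y_n} is almost surely finite on bounded sets. Then m is mass-stationary: for every translation-covariant measurable g : M(ℝ^d) × ℝ^d × ℝ^d → [0,∞], E[Σ_{n∈ℤ} g(m, 0, Y_n)] = E[Σ_{n∈ℤ} g(m, Y_n, 0)]. -/
open MeasureTheory ENNReal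

noncomputable section

/-!
By Tonelli, both sides are sums over `k` of expectations, so it suffices to match their terms.
Moving the origin to `Y_k` replaces `Y` by `Z_n = Y_{n+k} - Y_k`, which visits the same points up to
a translation and a reindexing. Covariance then gives `g(m_Y, Y_k, 0) = g(m_Z, 0, Z_{-k})`, because
`Y_0 = 0`, and `Z` has the law of `Y`. Thus the `k`-th term of the right-hand side is the `(-k)`-th
term of the left-hand side.
-/

section PointMeasure

variable {ι κ E F : Type*} [MeasurableSpace E] [MeasurableSpace F]

/-- The point measure `∑ i, δ_{y i}` of a family of points, counted with multiplicity: the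
measure `m` of the theorem is `pointMeasure (Y ω)`. -/
def pointMeasure (y : ι → E) : Measure E :=
  Measure.sum fun i => Measure.dirac (y i)

theorem measurable_pointMeasure [Countable ι] :
    Measurable (pointMeasure : (ι → E) → Measure E) := by
  refine Measure.measurable_of_measurable_coe _ fun s hs => ?_
  simp only [pointMeasure, Measure.sum_apply _ hs]
  exact Measurable.tsum fun i =>
    (Measure.measurable_coe hs).comp (Measure.measurable_dirac.comp (measurable_pi_apply i))

theorem map_pointMeasure {f : E → F} (hf : Measurable f) (y : ι → E) :
    (pointMeasure y).map f = pointMeasure (f ∘ y) := by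
  simp only [pointMeasure, Measure.map_sum hf.aemeasurable, Measure.map_dirac' hf,
    Function.comp_apply]

theorem pointMeasure_comp_equiv (e : κ ≃ ι) (y : ι → E) :
    pointMeasure (y ∘ e) = pointMeasure y :=
  Measure.sum_comp_equiv e fun i => Measure.dirac (y i)

theorem measurable_apply_pointMeasure [Countable ι] {g : Measure E → E → E → ℝ≥0∞}
    (hg : Measurable fun p : Measure E × E × E => g p.1 p.2.1 p.2.2)
    {u v : (ι → E) → E} (hu : Measurable u) (hv : Measurable v) :
    Measurable fun y => g (pointMeasure y) (u y) (v y) :=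
  hg.comp (measurable_pointMeasure.prodMk (hu.prodMk hv))

end PointMeasure

section StationaryIncrements

variable {G E Ω : Type*} [AddGroup G] [AddGroup E] [MeasurableSpace E] [MeasurableSpace Ω]
  {P : Measure Ω} {Y : Ω → G → E} {g : Measure E → E → E → ℝ≥0∞}

/-- The family `y` as seen from its `k`-th point: `n ↦ y (n + k) - y k`. -/
def incrementsFrom (k : G) (y : G → E) : G → E :=
  fun n => y (n + k) - y k

/-- The process `Y`, indexed by an additive group, has stationary increments: seen from any of its
points it has the same law. Measurability of the processes is part of `IdentDistrib`. -/
def HasStationaryIncrements (Y : Ω → G → E) (P : Measure Ω) : Prop :=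
  ∀ k, ProbabilityTheory.IdentDistrib (fun ω => incrementsFrom k (Y ω)) Y P P

/-- Invariance of `g` under simultaneous translation of the measure and of both points. This is
`Covariant3` with `ℝ^d` replaced by any additive group. -/
def IsTranslationCovariant (g : Measure E → E → E → ℝ≥0∞) : Prop :=
  ∀ (t x y : E) (ψ : Measure E), g (ψ.map fun z => z - t) (x - t) (y - t) = g ψ x y

theorem measurable_incrementsFrom [MeasurableSub₂ E] (k : G) :
    Measurable (incrementsFrom k : (G → E) → G → E) :=
  measurable_pi_lambda _ fun n => (measurable_pi_apply (n + k)).sub (measurable_pi_apply k)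

theorem HasStationaryIncrements.of_map_eq [MeasurableSub₂ E] (hYm : AEMeasurable Y P)
    (hstat : ∀ k, P.map (fun ω => incrementsFrom k (Y ω)) = P.map Y) :
    HasStationaryIncrements Y P := fun k =>
  { aemeasurable_fst := (measurable_incrementsFrom k).comp_aemeasurable hYm
    aemeasurable_snd := hYm
    map_eq := hstat k }

theorem map_sub_pointMeasure [MeasurableSub E] (k : G) (y : G → E) :
    (pointMeasure y).map (fun z => z - y k) = pointMeasure (incrementsFrom k y) := by
  rw [← pointMeasure_comp_equiv (Equiv.addRight k) y, map_pointMeasure (measurable_sub_const (y k))]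
  rfl

theorem IsTranslationCovariant.apply_pointMeasure_eq_incrementsFrom [MeasurableSub E]
    (hg : IsTranslationCovariant g) (k : G) {y : G → E} (hy : y 0 = 0) :
    g (pointMeasure y) (y k) 0
      = g (pointMeasure (incrementsFrom k y)) 0 (incrementsFrom k y (-k)) := by
  have origin_seen_from_k : incrementsFrom k y (-k) = 0 - y k := by
    rw [incrementsFrom, neg_add_cancel, hy]
  rw [← hg (y k), map_sub_pointMeasure, sub_self, origin_seen_from_k]

theorem HasStationaryIncrements.lintegral_pointMeasure_swap [Countable G] [MeasurableSub E]
    (hY : HasStationaryIncrements Y P) (hY0 : ∀ᵐ ω ∂P, Y ω 0 = 0)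
    (hgm : Measurable fun p : Measure E × E × E => g p.1 p.2.1 p.2.2)
    (hg : IsTranslationCovariant g) (k : G) :
    ∫⁻ ω, g (pointMeasure (Y ω)) (Y ω k) 0 ∂P
      = ∫⁻ ω, g (pointMeasure (Y ω)) 0 (Y ω (-k)) ∂P := by
  have measurable_term : Measurable fun y : G → E => g (pointMeasure y) 0 (y (-k)) :=
    measurable_apply_pointMeasure hgm measurable_const (measurable_pi_apply (-k))
  calc ∫⁻ ω, g (pointMeasure (Y ω)) (Y ω k) 0 ∂P
      = ∫⁻ ω, g (pointMeasure (incrementsFrom k (Y ω))) 0 (incrementsFrom k (Y ω) (-k)) ∂P :=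
        lintegral_congr_ae <| hY0.mono fun ω hω => hg.apply_pointMeasure_eq_incrementsFrom k hω
    _ = ∫⁻ ω, g (pointMeasure (Y ω)) 0 (Y ω (-k)) ∂P :=
        ((hY k).comp measurable_term).lintegral_eq

theorem stmt18_general [Countable G] [MeasurableSub E]
    (hY : HasStationaryIncrements Y P) (hY0 : ∀ᵐ ω ∂P, Y ω 0 = 0)
    (hgm : Measurable fun p : Measure E × E × E => g p.1 p.2.1 p.2.2)
    (hg : IsTranslationCovariant g) :
    ∫⁻ ω, ∑' n, g (pointMeasure (Y ω)) 0 (Y ω n) ∂P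
      = ∫⁻ ω, ∑' n, g (pointMeasure (Y ω)) (Y ω n) 0 ∂P := by
  have aemeasurable_Y : AEMeasurable Y P := (hY 0).aemeasurable_snd
  have aemeasurable_out (n : G) : AEMeasurable (fun ω => g (pointMeasure (Y ω)) 0 (Y ω n)) P :=
    measurable_apply_pointMeasure hgm measurable_const (measurable_pi_apply n)
      |>.comp_aemeasurable aemeasurable_Y
  have aemeasurable_in (n : G) : AEMeasurable (fun ω => g (pointMeasure (Y ω)) (Y ω n) 0) P :=
    measurable_apply_pointMeasure hgm (measurable_pi_apply n) measurable_const
      |>.comp_aemeasurable aemeasurable_Y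
  calc ∫⁻ ω, ∑' n, g (pointMeasure (Y ω)) 0 (Y ω n) ∂P
      = ∑' n, ∫⁻ ω, g (pointMeasure (Y ω)) 0 (Y ω n) ∂P := lintegral_tsum aemeasurable_out
    _ = ∑' k, ∫⁻ ω, g (pointMeasure (Y ω)) 0 (Y ω (-k)) ∂P :=
        ((Equiv.neg G).tsum_eq fun n => ∫⁻ ω, g (pointMeasure (Y ω)) 0 (Y ω n) ∂P).symm
    _ = ∑' k, ∫⁻ ω, g (pointMeasure (Y ω)) (Y ω k) 0 ∂P :=
        tsum_congr fun k => (hY.lintegral_pointMeasure_swap hY0 hgm hg k).symm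
    _ = ∫⁻ ω, ∑' n, g (pointMeasure (Y ω)) (Y ω n) 0 ∂P := (lintegral_tsum aemeasurable_in).symm

end StationaryIncrements

/-- Let `(Y_n)_{n ∈ ℤ}` be ℝ^d-valued with `Y 0 = 0` and stationary
increments, and suppose the random measure `m := ∑_{n ∈ ℤ} δ_{Y_n}` is a.s. finite on bounded
sets.  Then `m` is mass-stationary: for every translation-covariant measurable `g`,
`E[∑_n g(m, 0, Y_n)] = E[∑_n g(m, Y_n, 0)]`. -/
theorem stmt18 {d : ℕ} {Ω : Type*} [MeasurableSpace Ω] (P : Measure Ω) [IsProbabilityMeasure P]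
    (Y : Ω → ℤ → Vec d) (hYm : Measurable Y)
    (hY0 : ∀ ω, Y ω 0 = 0)
    (hstat : ∀ k : ℤ, P.map (fun ω => fun n => Y ω (n + k) - Y ω k) = P.map Y)
    (hbf : ∀ᵐ ω ∂P, BddFinite (Measure.sum fun n : ℤ => Measure.dirac (Y ω n)))
    (g : Measure (Vec d) → Vec d → Vec d → ℝ≥0∞)
    (hgm : Measurable (fun p : Measure (Vec d) × Vec d × Vec d => g p.1 p.2.1 p.2.2))
    (hgcov : Covariant3 g) :
    ∫⁻ ω, (∑' n : ℤ, g (Measure.sum fun m : ℤ => Measure.dirac (Y ω m)) 0 (Y ω n)) ∂P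
      = ∫⁻ ω, (∑' n : ℤ, g (Measure.sum fun m : ℤ => Measure.dirac (Y ω m)) (Y ω n) 0) ∂P := by
  have hY : HasStationaryIncrements Y P := .of_map_eq hYm.aemeasurable hstat
  exact stmt18_general hY (.of_forall hY0) hgm hgcov
end
end
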